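/- arXiv:1204.1856 — 2 statements merged into one kernel-verified Lean document; each statement's English description precedes it below -/
import Mathlib

section
/- Under (H1) and (H2), for every partition Δ of [0,T] the function P^Δ from the characterization of the equilibrium of Problem (LQ^Δ) satisfies 0 ≤ P^Δ(t) ≤ P̄₀^Δ(t) for all t ∈ [0,T], where P̄₀^Δ:[0,T]→𝒮ⁿ is the unique solution of the Lyapunov equation Ṗ(s)+P(s)A^Δ(s)+A^Δ(s)ᵀP(s)+Q^Δ(s)=0 on (0,T) with terminal condition P(T)=G(t_{N−1}). Consequently there exists a constant K>0, depending only on T and on sup-norms of A, Q and G (and in particular independent of the partition Δ), such that ‖P^Δ(t)‖ ≤ K for all t ∈ [0,T] and all partitions Δ. -/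
open Set Matrix MeasureTheory

attribute [local instance] Matrix.normedAddCommGroup Matrix.normedSpace

/-- `tp` enumerates a partition `Δ : 0 = t₀ < t₁ < ⋯ < t_N = T` of `[0,T]`. -/
def IsPartition (T : ℝ) (N : ℕ) (tp : ℕ → ℝ) : Prop :=
  0 < N ∧ tp 0 = 0 ∧ tp N = T ∧ ∀ k < N, tp k < tp (k + 1)

/-- `AΔ, BΔ, QΔ, RΔ` are the piecewise frozen coefficients of `A, B, Q, R`
associated with the partition `tp` (freezing the first variable at `t_{k-1}`). -/
def IsFrozen (n m : ℕ) (N : ℕ) (tp : ℕ → ℝ)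
    (A : ℝ → ℝ → Matrix (Fin n) (Fin n) ℝ) (B : ℝ → ℝ → Matrix (Fin n) (Fin m) ℝ)
    (Q : ℝ → ℝ → Matrix (Fin n) (Fin n) ℝ) (R : ℝ → ℝ → Matrix (Fin m) (Fin m) ℝ)
    (AΔ : ℝ → Matrix (Fin n) (Fin n) ℝ) (BΔ : ℝ → Matrix (Fin n) (Fin m) ℝ)
    (QΔ : ℝ → Matrix (Fin n) (Fin n) ℝ) (RΔ : ℝ → Matrix (Fin m) (Fin m) ℝ) : Prop :=
  ∀ k < N, ∀ s ∈ Ico (tp k) (tp (k + 1)),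
    AΔ s = A (tp k) s ∧ BΔ s = B (tp k) s ∧ QΔ s = Q (tp k) s ∧ RΔ s = R (tp k) s

/-- `PΔ` (together with the closed-loop fundamental solutions `Φ k = Φ^Δ(·;t_k)`)
is the piecewise Riccati function characterizing the equilibrium of Problem (LQ^Δ):
it is right-continuous on each `[t_{k-1},t_k)` and solves the Riccati ODE on each
`(t_{k-1},t_k)`, with `P^Δ(T) = G(t_{N-1})` and left limits at each node `t_k`
(`1 ≤ k ≤ N`) given by
`P^Δ(t_k−0) = Φ^Δ(T;t_k)ᵀG(t_{k−1})Φ^Δ(T;t_k) + ∫_{t_k}^T [Φ^ΔᵀQ(t_{k−1},·)Φ^Δ + Ψ^ΔᵀR(t_{k−1},·)Ψ^Δ]`,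
where `Φ^Δ(·;t_k)` solves `∂_sΦ = [A^Δ − B^Δ(R^Δ)⁻¹(B^Δ)ᵀP^Δ]Φ`, `Φ(t_k;t_k) = I`
(in Volterra integral form) and `Ψ^Δ(s;t_k) = −R^Δ(s)⁻¹B^Δ(s)ᵀP^Δ(s)Φ^Δ(s;t_k)`. -/
noncomputable def IsPiecewiseRiccati (n m : ℕ) (N : ℕ) (T : ℝ) (tp : ℕ → ℝ)
    (Q : ℝ → ℝ → Matrix (Fin n) (Fin n) ℝ) (R : ℝ → ℝ → Matrix (Fin m) (Fin m) ℝ)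
    (G : ℝ → Matrix (Fin n) (Fin n) ℝ)
    (AΔ : ℝ → Matrix (Fin n) (Fin n) ℝ) (BΔ : ℝ → Matrix (Fin n) (Fin m) ℝ)
    (QΔ : ℝ → Matrix (Fin n) (Fin n) ℝ) (RΔ : ℝ → Matrix (Fin m) (Fin m) ℝ)
    (PΔ : ℝ → Matrix (Fin n) (Fin n) ℝ) (Φ : ℕ → ℝ → Matrix (Fin n) (Fin n) ℝ) :
    Prop :=
  (∀ k < N, ContinuousOn PΔ (Ico (tp k) (tp (k + 1)))) ∧
  PΔ T = G (tp (N - 1)) ∧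
  (∀ k < N, ∀ s ∈ Ioo (tp k) (tp (k + 1)),
    HasDerivAt PΔ
      (-(PΔ s * AΔ s + (AΔ s)ᵀ * PΔ s + QΔ s
          - PΔ s * BΔ s * (RΔ s)⁻¹ * (BΔ s)ᵀ * PΔ s)) s) ∧
  (∀ k ≤ N, ∀ s ∈ Icc (tp k) T,
    Φ k s = 1 + ∫ r in (tp k)..s,
      (AΔ r - BΔ r * (RΔ r)⁻¹ * (BΔ r)ᵀ * PΔ r) * Φ k r) ∧
  (∀ k, 1 ≤ k → k ≤ N →
    Filter.Tendsto PΔ (nhdsWithin (tp k) (Iio (tp k))) (nhds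
      ((Φ k T)ᵀ * G (tp (k - 1)) * Φ k T
        + ∫ s in (tp k)..T,
            ((Φ k s)ᵀ * Q (tp (k - 1)) s * Φ k s
              + ((RΔ s)⁻¹ * (BΔ s)ᵀ * PΔ s * Φ k s)ᵀ * R (tp (k - 1)) s
                  * ((RΔ s)⁻¹ * (BΔ s)ᵀ * PΔ s * Φ k s)))))

/-!
Between nodes, a differential inequality `X' + XM + MᵀX ≤ 0` read backwards in time preserves the
cone of nonnegative matrices: that cone is invariant to first order under the reversed flow, and a
Gronwall estimate for the distance to it (Nagumo's argument) does the rest.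

Along its own closed-loop flow `P^Δ` solves a linear Lyapunov equation, so by dynamic programming
`P^Δ(t_k)` is the cost from `t_k` on with the data frozen at `t_k`, whereas the left limit
`P^Δ(t_k - 0)` is the same cost with the data frozen at `t_{k-1}`. Both are nonnegative, and by
(H2) the second is at most the first: backwards in time `P^Δ` only jumps down. Hence `P^Δ ≥ 0`, and
`P^Δ` stays below every continuous supersolution `X` of the Lyapunov equation for `A^Δ`, `Q^Δ` with
`X(T) ≥ G(t_{N-1})`; these include `P̄₀^Δ` and an explicit scalar one, which does not see `Δ`.
-/

namespace FrozenLQ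

open Filter Topology
open scoped MatrixOrder NNReal

section MatrixCalculus

variable {l m n : Type*}

/-- Matrix multiplication as a continuous bilinear map, so that the calculus of bilinear maps
applies to products of matrix-valued functions. -/
noncomputable def mulCLM (l m n : Type*) [Finite l] [Fintype m] [Finite n] :
    Matrix l m ℝ →L[ℝ] Matrix m n ℝ →L[ℝ] Matrix l n ℝ :=
  (mulLinearMap ℝ).toContinuousBilinearMap

lemma norm_mul_le_card_mul [Fintype l] [Fintype m] [Fintype n] (a : Matrix l m ℝ)
    (b : Matrix m n ℝ) : ‖a * b‖ ≤ Fintype.card m * ‖a‖ * ‖b‖ := by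
  refine (norm_le_iff (by positivity)).2 fun i j => ?_
  calc ‖(a * b) i j‖ ≤ ∑ k, ‖a i k‖ * ‖b k j‖ := by
        simpa only [mul_apply, norm_mul] using norm_sum_le Finset.univ fun k => a i k * b k j
    _ ≤ ∑ _k : m, ‖a‖ * ‖b‖ := by
        gcongr
        · exact norm_entry_le_entrywise_sup_norm a
        · exact norm_entry_le_entrywise_sup_norm b
    _ = Fintype.card m * ‖a‖ * ‖b‖ := by
        rw [Finset.sum_const, nsmul_eq_mul, Finset.card_univ, mul_assoc]

lemma hasDerivWithinAt_mul [Finite l] [Fintype m] [Finite n] {f : ℝ → Matrix l m ℝ}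
    {g : ℝ → Matrix m n ℝ} {f' : Matrix l m ℝ} {g' : Matrix m n ℝ} {s : Set ℝ} {x : ℝ}
    (hf : HasDerivWithinAt f f' s x) (hg : HasDerivWithinAt g g' s x) :
    HasDerivWithinAt (fun t => f t * g t) (f x * g' + f' * g x) s x := by
  cases nonempty_fintype l
  cases nonempty_fintype n
  exact (mulCLM l m n).hasDerivWithinAt_of_bilinear hf hg

lemma hasDerivWithinAt_transpose [Finite l] [Finite m] {f : ℝ → Matrix l m ℝ} {f' : Matrix l m ℝ}
    {s : Set ℝ} {x : ℝ} (hf : HasDerivWithinAt f f' s x) :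
    HasDerivWithinAt (fun t => (f t)ᵀ) f'ᵀ s x := by
  cases nonempty_fintype l
  cases nonempty_fintype m
  exact (transposeLinearEquiv l m ℝ ℝ).toContinuousLinearEquiv.hasFDerivAt.comp_hasDerivWithinAt
    x hf

lemma continuousOn_mul [Fintype m] {X : Type*} [TopologicalSpace X] {s : Set X}
    {f : X → Matrix l m ℝ} {g : X → Matrix m n ℝ} (hf : ContinuousOn f s)
    (hg : ContinuousOn g s) : ContinuousOn (fun x => f x * g x) s :=
  (continuous_fst.matrix_mul continuous_snd).comp_continuousOn (hf.prodMk hg)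

lemma continuousOn_transpose {X : Type*} [TopologicalSpace X] {s : Set X} {f : X → Matrix l m ℝ}
    (hf : ContinuousOn f s) : ContinuousOn (fun x => (f x)ᵀ) s :=
  continuous_id.matrix_transpose.comp_continuousOn hf

end MatrixCalculus

section LoewnerOrder

variable {m n : Type*}

lemma transpose_eq_of_nonneg {a : Matrix n n ℝ} (ha : 0 ≤ a) : aᵀ = a := by
  simpa [IsHermitian] using (nonneg_iff_posSemidef.1 ha).isHermitian

lemma nonneg_iff_forall_dotProduct [Fintype n] {a : Matrix n n ℝ} :
    0 ≤ a ↔ aᵀ = a ∧ ∀ x : n → ℝ, 0 ≤ x ⬝ᵥ (a *ᵥ x) := by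
  simp [nonneg_iff_posSemidef, posSemidef_iff_dotProduct_mulVec, IsHermitian]

lemma transpose_mul_mul_nonneg [Fintype m] [Finite n] {a : Matrix m m ℝ} (ha : 0 ≤ a)
    (b : Matrix m n ℝ) : 0 ≤ bᵀ * a * b := by
  simpa using ((nonneg_iff_posSemidef.1 ha).conjTranspose_mul_mul_same b).nonneg

lemma transpose_mul_mul_mono [Fintype m] [Finite n] {a b : Matrix m m ℝ} (hab : a ≤ b)
    (c : Matrix m n ℝ) : cᵀ * a * c ≤ cᵀ * b * c := by
  rw [← sub_nonneg, ← Matrix.sub_mul, ← Matrix.mul_sub]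
  exact transpose_mul_mul_nonneg (sub_nonneg.2 hab) c

lemma isClosed_nonneg [Finite n] : IsClosed (Ici (0 : Matrix n n ℝ)) := by
  cases nonempty_fintype n
  simp only [Ici, nonneg_iff_forall_dotProduct, ofPred_and, ofPred_forall]
  exact (isClosed_eq continuous_id.matrix_transpose continuous_id).inter <|
    isClosed_iInter fun x => isClosed_le continuous_const <|
      continuous_const.dotProduct (continuous_id.matrix_mulVec continuous_const)

instance [Finite n] : OrderClosedTopology (Matrix n n ℝ) where
  isClosed_le' := by
    have : IsClosed {p : Matrix n n ℝ × Matrix n n ℝ | 0 ≤ p.2 - p.1} :=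
      isClosed_nonneg.preimage (continuous_snd.sub continuous_fst)
    simpa only [sub_nonneg] using this

-- The topology of the norm is `instTopologicalSpaceMatrix` only after unfolding, and integrals
-- refer to the former.
instance [Fintype n] : @OrderClosedTopology (Matrix n n ℝ)
    PseudoMetricSpace.toUniformSpace.toTopologicalSpace _ :=
  inferInstanceAs (OrderClosedTopology (Matrix n n ℝ))

instance : IsOrderedModule ℝ (Matrix n n ℝ) :=
  .of_smul_nonneg fun _ hc _ ha => ((nonneg_iff_posSemidef.1 ha).smul hc).nonneg

lemma diag_le_norm_of_le [Fintype n] {a b : Matrix n n ℝ} (hab : a ≤ b) (i : n) :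
    a i i ≤ ‖b‖ :=
  calc a i i ≤ b i i := sub_nonneg.1 (le_iff.1 hab).diag_nonneg
    _ ≤ ‖b i i‖ := le_abs_self _
    _ ≤ ‖b‖ := norm_entry_le_entrywise_sup_norm b

lemma norm_le_norm_of_nonneg_of_le [Fintype n] {a b : Matrix n n ℝ} (ha : 0 ≤ a) (hab : a ≤ b) :
    ‖a‖ ≤ ‖b‖ := by
  classical
  refine (norm_le_iff (norm_nonneg b)).2 fun i j => ?_
  have hji : a j i = a i j := congrFun (congrFun (transpose_eq_of_nonneg ha) i) j
  have hquad := (nonneg_iff_forall_dotProduct.1 ha).2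
  have hplus := hquad (Pi.single i 1 + Pi.single j 1)
  have hminus := hquad (Pi.single i 1 - Pi.single j 1)
  simp only [mulVec_add, mulVec_sub, add_dotProduct, sub_dotProduct, mulVec_single_one,
    dotProduct_add, dotProduct_sub, single_one_dotProduct, col_apply] at hplus hminus
  have hi := diag_le_norm_of_le hab i
  have hj := diag_le_norm_of_le hab j
  rw [Real.norm_eq_abs, abs_le]
  constructor <;> linarith

lemma dotProduct_mulVec_le [Fintype n] (a : Matrix n n ℝ) (x : n → ℝ) :
    x ⬝ᵥ (a *ᵥ x) ≤ Fintype.card n * ‖a‖ * (x ⬝ᵥ x) := by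
  have hentry : ∀ i j, x i * (a i j * x j) ≤ ‖a‖ * (|x i| * |x j|) := fun i j =>
    calc x i * (a i j * x j) ≤ |x i * (a i j * x j)| := le_abs_self _
      _ = |a i j| * (|x i| * |x j|) := by rw [abs_mul, abs_mul, mul_left_comm]
      _ ≤ ‖a‖ * (|x i| * |x j|) :=
          mul_le_mul_of_nonneg_right (norm_entry_le_entrywise_sup_norm a) (by positivity)
  calc x ⬝ᵥ (a *ᵥ x) = ∑ i, ∑ j, x i * (a i j * x j) := by
        simp only [dotProduct, mulVec, Finset.mul_sum]
    _ ≤ ∑ i, ∑ j, ‖a‖ * (|x i| * |x j|) :=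
        Finset.sum_le_sum fun i _ => Finset.sum_le_sum fun j _ => hentry i j
    _ = ‖a‖ * (∑ i, |x i|) ^ 2 := by
        rw [sq, Finset.sum_mul_sum, Finset.mul_sum]
        simp only [Finset.mul_sum]
    _ ≤ ‖a‖ * (Fintype.card n * ∑ i, |x i| ^ 2) := by
        gcongr
        exact sq_sum_le_card_mul_sum_sq
    _ = Fintype.card n * ‖a‖ * (x ⬝ᵥ x) := by
        simp only [sq_abs, dotProduct, ← sq]
        ring

lemma smul_one_mono [DecidableEq n] : Monotone fun c : ℝ => c • (1 : Matrix n n ℝ) :=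
  fun _ _ h => smul_le_smul_of_nonneg_right h PosSemidef.one.nonneg

lemma le_smul_one_of_norm_le [Fintype n] [DecidableEq n] {a : Matrix n n ℝ} {c : ℝ} (ha : aᵀ = a)
    (hc : ‖a‖ ≤ c) : a ≤ (Fintype.card n * c) • (1 : Matrix n n ℝ) := by
  refine le_trans (sub_nonneg.1 (nonneg_iff_forall_dotProduct.2 ⟨by simp [ha], fun x => ?_⟩))
    (smul_one_mono (mul_le_mul_of_nonneg_left hc (Nat.cast_nonneg _)))
  simpa [sub_mulVec, smul_mulVec] using dotProduct_mulVec_le a x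

lemma norm_le_of_nonneg_of_le_smul_one [Fintype n] [DecidableEq n] {a : Matrix n n ℝ} {c : ℝ}
    (hc : 0 ≤ c) (ha : 0 ≤ a) (hac : a ≤ c • (1 : Matrix n n ℝ)) : ‖a‖ ≤ c :=
  calc ‖a‖ ≤ ‖c • (1 : Matrix n n ℝ)‖ := norm_le_norm_of_nonneg_of_le ha hac
    _ = c * ‖(fun _ => 1 : n → ℝ)‖ := by
        rw [norm_smul, Real.norm_of_nonneg hc, ← diagonal_one, norm_diagonal]
    _ ≤ c := mul_le_of_le_one_right hc ((pi_norm_const_le 1).trans norm_one.le)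

lemma lyapunov_smul_one_le_neg [Fintype n] [DecidableEq n] {a q : Matrix n n ℝ}
    {α κ c : ℝ} (ha : ‖a‖ ≤ α) (hq : qᵀ = q) (hqκ : ‖q‖ ≤ κ) (hc : Fintype.card n * κ ≤ c) :
    (-((2 * Fintype.card n * α + 1) * c)) • (1 : Matrix n n ℝ) + c • (1 : Matrix n n ℝ) * a
      + aᵀ * c • (1 : Matrix n n ℝ) ≤ -q := by
  have hc0 : 0 ≤ c := (mul_nonneg (Nat.cast_nonneg _) ((norm_nonneg q).trans hqκ)).trans hc
  have hq' : q ≤ c • 1 := (le_smul_one_of_norm_le hq hqκ).trans (smul_one_mono hc)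
  have hnorm : ‖a + aᵀ‖ ≤ 2 * α :=
    (norm_add_le _ _).trans (by rw [norm_transpose]; linarith)
  have hsym : a + aᵀ ≤ (Fintype.card n * (2 * α)) • 1 :=
    le_smul_one_of_norm_le (by rw [transpose_add, transpose_transpose, add_comm]) hnorm
  calc (-((2 * Fintype.card n * α + 1) * c)) • (1 : Matrix n n ℝ) + c • (1 : Matrix n n ℝ) * a
      + aᵀ * c • (1 : Matrix n n ℝ)
      = (-((2 * Fintype.card n * α + 1) * c)) • (1 : Matrix n n ℝ) + c • (a + aᵀ) := by
        rw [Matrix.smul_mul, Matrix.one_mul, Matrix.mul_smul, Matrix.mul_one]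
        module
    _ ≤ (-((2 * Fintype.card n * α + 1) * c)) • (1 : Matrix n n ℝ)
          + c • ((Fintype.card n * (2 * α)) • 1) := by
        gcongr
    _ = -(c • 1) := by module
    _ ≤ -q := neg_le_neg hq'

end LoewnerOrder

section Nagumo

variable {E : Type*} [NormedAddCommGroup E] [NormedSpace ℝ E] [ProperSpace E] {S : Set E} {K : ℝ≥0}

lemma eventually_slope_infDist_lt (hS : IsClosed S) (hne : S.Nonempty) {w : E → E}
    (hw : LipschitzWith K w)
    (hsub : ∀ y ∈ S, (fun h : ℝ => Metric.infDist (y + h • w y) S) =o[𝓝[>] 0] fun h => h)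
    {Y : ℝ → E} {t r : ℝ} (hY : HasDerivWithinAt Y (w (Y t)) (Ioi t) t)
    (hr : K * Metric.infDist (Y t) S < r) :
    ∀ᶠ z in 𝓝[>] t, (z - t)⁻¹ * (Metric.infDist (Y z) S - Metric.infDist (Y t) S) < r := by
  obtain ⟨y, hyS, hy⟩ := hS.exists_infDist_eq_dist hne (Y t)
  obtain ⟨ε, hε, hεr⟩ : ∃ ε > 0, K * Metric.infDist (Y t) S + 2 * ε < r :=
    ⟨(r - K * Metric.infDist (Y t) S) / 3, by linarith, by linarith⟩
  have hshift : Tendsto (fun z => z - t) (𝓝[>] t) (𝓝[>] 0) := by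
    have hcont : ContinuousWithinAt (fun z => z - t) (Ioi t) t := by fun_prop
    simpa using hcont.tendsto_nhdsWithin (t := Ioi (t - t)) fun z hz => sub_lt_sub_right hz t
  filter_upwards [((hsub y hyS).comp_tendsto hshift).bound hε,
    (hasDerivWithinAt_iff_isLittleO.1 hY).bound hε, self_mem_nhdsWithin] with z hSz hYz hz
  have hpos : 0 < z - t := sub_pos.2 hz
  simp only [Function.comp_apply, Real.norm_of_nonneg Metric.infDist_nonneg,
    Real.norm_of_nonneg hpos.le] at hSz hYz
  have hsplit : Y z - (y + (z - t) • w y)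
      = (Y z - Y t - (z - t) • w (Y t)) + (Y t - y) + (z - t) • (w (Y t) - w y) := by
    module
  have hdist : Metric.infDist (Y z) S
      ≤ ε * (z - t) + Metric.infDist (Y t) S + (z - t) * (K * Metric.infDist (Y t) S)
        + ε * (z - t) :=
    calc Metric.infDist (Y z) S
        ≤ Metric.infDist (y + (z - t) • w y) S + ‖Y z - (y + (z - t) • w y)‖ := by
          rw [← dist_eq_norm]
          exact Metric.infDist_le_infDist_add_dist
      _ ≤ ε * (z - t) + (ε * (z - t) + Metric.infDist (Y t) S
            + (z - t) * (K * Metric.infDist (Y t) S)) := by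
          rw [hsplit]
          refine add_le_add hSz (norm_add₃_le.trans ?_)
          rw [norm_smul, Real.norm_of_nonneg hpos.le, hy, dist_eq_norm]
          gcongr
          simpa only [dist_eq_norm] using hw.dist_le_mul (Y t) y
      _ = _ := by ring
  rw [inv_mul_lt_iff₀ hpos]
  nlinarith

lemma infDist_le_mul_exp_of_subtangential (hS : IsClosed S) (hne : S.Nonempty) {v : ℝ → E → E}
    {Y : ℝ → E} {a b : ℝ} (hv : ∀ t ∈ Ico a b, LipschitzWith K (v t))
    (hsub : ∀ t ∈ Ico a b, ∀ y ∈ S,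
      (fun h : ℝ => Metric.infDist (y + h • v t y) S) =o[𝓝[>] 0] fun h => h)
    (hY : ContinuousOn Y (Icc a b))
    (hY' : ∀ t ∈ Ico a b, HasDerivWithinAt Y (v t (Y t)) (Ioi t) t) {t : ℝ} (ht : t ∈ Icc a b) :
    Metric.infDist (Y t) S ≤ Metric.infDist (Y a) S * Real.exp (K * (t - a)) := by
  have h := le_gronwallBound_of_liminf_deriv_right_le
    (f := fun t => Metric.infDist (Y t) S) (f' := fun t => K * Metric.infDist (Y t) S) (ε := 0)
    ((Metric.continuous_infDist_pt S).comp_continuousOn hY)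
    (fun t ht r hr =>
      (eventually_slope_infDist_lt hS hne (hv t ht) (hsub t ht) (hY' t ht) hr).frequently)
    le_rfl (fun t _ => (add_zero _).ge) t ht
  rwa [gronwallBound_ε0] at h

end Nagumo

section LyapunovComparison

variable {n : Type*} [Fintype n]

/-- The vector field of the time-reversed Lyapunov equation with inhomogeneity `w`. -/
def lyapunovField (m w y : Matrix n n ℝ) : Matrix n n ℝ :=
  mᵀ * y + y * m + w

lemma lipschitzWith_lyapunovField {m w : Matrix n n ℝ} {C : ℝ≥0} (hm : ‖m‖ ≤ C) :
    LipschitzWith (2 * Fintype.card n * C) (lyapunovField m w) := by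
  refine LipschitzWith.of_dist_le_mul fun y z => ?_
  have hdiff : lyapunovField m w y - lyapunovField m w z = mᵀ * (y - z) + (y - z) * m := by
    simp only [lyapunovField]
    noncomm_ring
  rw [dist_eq_norm, dist_eq_norm, hdiff]
  calc ‖mᵀ * (y - z) + (y - z) * m‖
      ≤ Fintype.card n * ‖m‖ * ‖y - z‖ + Fintype.card n * ‖y - z‖ * ‖m‖ := by
        refine (norm_add_le _ _).trans (add_le_add ?_ (norm_mul_le_card_mul _ _))
        simpa only [norm_transpose] using norm_mul_le_card_mul mᵀ (y - z)
    _ = 2 * Fintype.card n * ‖m‖ * ‖y - z‖ := by ring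
    _ ≤ 2 * Fintype.card n * C * ‖y - z‖ := by gcongr

-- `y + h (mᵀy + ym + w)` differs from the nonnegative matrix `(1 + hm)ᵀ y (1 + hm) + hw` by
-- `O(h²)`.
lemma infDist_lyapunovField_isLittleO {m w y : Matrix n n ℝ} (hw : 0 ≤ w) (hy : 0 ≤ y) :
    (fun h : ℝ => Metric.infDist (y + h • lyapunovField m w y) (Ici 0))
      =o[𝓝[>] 0] fun h => h := by
  classical
  refine Asymptotics.IsBigO.trans_isLittleO (g := fun h : ℝ => h ^ 2) ?_
    ((Asymptotics.isLittleO_pow_id one_lt_two).mono nhdsWithin_le_nhds)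
  refine Asymptotics.IsBigO.of_bound ‖mᵀ * y * m‖ ?_
  filter_upwards [self_mem_nhdsWithin] with h hh
  have hmem : 0 ≤ (1 + h • m)ᵀ * y * (1 + h • m) + h • w :=
    add_nonneg (transpose_mul_mul_nonneg hy _) (smul_nonneg (le_of_lt hh) hw)
  have hdiff : y + h • lyapunovField m w y - ((1 + h • m)ᵀ * y * (1 + h • m) + h • w)
      = -(h ^ 2 • (mᵀ * y * m)) := by
    simp only [lyapunovField, transpose_add, transpose_one, transpose_smul, add_mul, mul_add,
      one_mul, mul_one, Matrix.smul_mul, Matrix.mul_smul, mul_assoc]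
    module
  calc ‖Metric.infDist (y + h • lyapunovField m w y) (Ici 0)‖
      ≤ ‖y + h • lyapunovField m w y - ((1 + h • m)ᵀ * y * (1 + h • m) + h • w)‖ := by
        rw [Real.norm_of_nonneg Metric.infDist_nonneg, ← dist_eq_norm]
        exact Metric.infDist_le_dist_of_mem hmem
    _ = ‖mᵀ * y * m‖ * ‖h ^ 2‖ := by
        rw [hdiff, norm_neg, norm_smul, mul_comm]

variable {X X' M : ℝ → Matrix n n ℝ} {a b C : ℝ}

lemma infDist_nonneg_le_of_lyapunov (hX : ∀ t ∈ Icc a b, HasDerivAt X (X' t) t)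
    (hineq : ∀ t ∈ Icc a b, X' t + X t * M t + (M t)ᵀ * X t ≤ 0) (hM : ∀ t ∈ Icc a b, ‖M t‖ ≤ C)
    (hab : a ≤ b) :
    Metric.infDist (X a) (Ici 0)
      ≤ Metric.infDist (X b) (Ici 0) * Real.exp (2 * Fintype.card n * C * (b - a)) := by
  lift C to ℝ≥0 using (norm_nonneg _).trans (hM a ⟨le_rfl, hab⟩)
  have hmem : ∀ {s}, s ∈ Ico 0 (b - a) → b - s ∈ Icc a b := fun hs =>
    ⟨by linarith [hs.2], by linarith [hs.1]⟩
  have hderiv : ∀ s ∈ Icc 0 (b - a), HasDerivAt (fun s => X (b - s)) (-X' (b - s)) s :=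
    fun s hs => HasDerivAt.comp_const_sub b s (hX _ ⟨by linarith [hs.2], by linarith [hs.1]⟩)
  have h := infDist_le_mul_exp_of_subtangential (K := 2 * Fintype.card n * C)
    (Y := fun s => X (b - s)) (a := 0) (b := b - a)
    (v := fun s => lyapunovField (M (b - s))
      (-(X' (b - s) + X (b - s) * M (b - s) + (M (b - s))ᵀ * X (b - s))))
    isClosed_nonneg nonempty_Ici
    (fun s hs => lipschitzWith_lyapunovField (hM _ (hmem hs)))
    (fun s hs y hy => infDist_lyapunovField_isLittleO (neg_nonneg.2 (hineq _ (hmem hs))) hy)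
    (fun s hs => (hderiv s hs).continuousAt.continuousWithinAt)
    (fun s hs => ((hderiv s (Ico_subset_Icc_self hs)).congr_deriv <| by
      simp only [lyapunovField]; abel).hasDerivWithinAt)
    (t := b - a) ⟨sub_nonneg.2 hab, le_rfl⟩
  simpa using h

lemma nonneg_of_lyapunov_Ioo {p : Matrix n n ℝ} (hX : ∀ t ∈ Ioo a b, HasDerivAt X (X' t) t)
    (hineq : ∀ t ∈ Ioo a b, X' t + X t * M t + (M t)ᵀ * X t ≤ 0) (hM : ∀ t ∈ Ioo a b, ‖M t‖ ≤ C)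
    (hp : Tendsto X (𝓝[<] b) (𝓝 p)) (hp0 : 0 ≤ p) : ∀ t ∈ Ioo a b, 0 ≤ X t := by
  intro t ht
  have hlim : Tendsto (fun s => Metric.infDist (X s) (Ici 0)
      * Real.exp (2 * Fintype.card n * C * (s - t))) (𝓝[<] b) (𝓝 0) := by
    have hexp : ContinuousAt (fun s => Real.exp (2 * Fintype.card n * C * (s - t))) b := by fun_prop
    simpa [Metric.infDist_zero_of_mem (s := Ici (0 : Matrix n n ℝ)) hp0] using
      (((Metric.continuous_infDist_pt (Ici (0 : Matrix n n ℝ))).tendsto p).comp hp).mul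
        (hexp.tendsto.mono_left nhdsWithin_le_nhds)
  have hdist : Metric.infDist (X t) (Ici 0) ≤ 0 := by
    refine ge_of_tendsto hlim ?_
    filter_upwards [Ioo_mem_nhdsLT ht.2] with s hs
    have hsub : Icc t s ⊆ Ioo a b := fun r hr => ⟨ht.1.trans_le hr.1, hr.2.trans_lt hs.2⟩
    exact infDist_nonneg_le_of_lyapunov (fun r hr => hX r (hsub hr))
      (fun r hr => hineq r (hsub hr)) (fun r hr => hM r (hsub hr)) hs.1.le
  exact (isClosed_nonneg.mem_iff_infDist_zero nonempty_Ici).2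
    (hdist.antisymm Metric.infDist_nonneg)

lemma nonneg_of_lyapunov {p : Matrix n n ℝ} (hXc : ContinuousOn X (Ico a b))
    (hX : ∀ t ∈ Ioo a b, HasDerivAt X (X' t) t)
    (hineq : ∀ t ∈ Ioo a b, X' t + X t * M t + (M t)ᵀ * X t ≤ 0) (hM : ∀ t ∈ Ioo a b, ‖M t‖ ≤ C)
    (hp : Tendsto X (𝓝[<] b) (𝓝 p)) (hp0 : 0 ≤ p) : ∀ t ∈ Ico a b, 0 ≤ X t := by
  have hinner := nonneg_of_lyapunov_Ioo hX hineq hM hp hp0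
  intro t ht
  rcases ht.1.eq_or_lt with rfl | hat
  · have := left_nhdsWithin_Ioo_neBot ht.2
    refine ge_of_tendsto ((hXc a ht).mono_left (nhdsWithin_mono a Ioo_subset_Ico_self)) ?_
    exact eventually_nhdsWithin_of_forall hinner
  · exact hinner t ⟨hat, ht.2⟩

end LyapunovComparison

section PiecewiseContinuous

/-- `f` is continuous on each `[t_k, t_{k+1})`, `j ≤ k < N`, with a left limit at `t_{k+1}`; this is
encoded by a continuous function on `[t_k, t_{k+1}]` which agrees with `f` on `[t_k, t_{k+1})`. -/
def PiecewiseContinuous {E : Type*} [TopologicalSpace E] (j N : ℕ) (tp : ℕ → ℝ) (f : ℝ → E) :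
    Prop :=
  ∀ k, j ≤ k → k < N →
    ∃ g, ContinuousOn g (Icc (tp k) (tp (k + 1))) ∧ EqOn f g (Ico (tp k) (tp (k + 1)))

lemma exists_mem_Ico_succ_of_mem_Ico {α : Type*} [LinearOrder α] {u : ℕ → α} {j N : ℕ} (hjN : j ≤ N)
    {s : α} (hs : s ∈ Ico (u j) (u N)) : ∃ k, j ≤ k ∧ k < N ∧ s ∈ Ico (u k) (u (k + 1)) := by
  induction N, hjN using Nat.le_induction with
  | base => exact absurd hs.2 (not_lt.2 hs.1)
  | succ N hN ih =>
    rcases lt_or_ge s (u N) with h | h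
    · obtain ⟨k, hjk, hk, hks⟩ := ih ⟨hs.1, h⟩
      exact ⟨k, hjk, hk.trans N.lt_succ_self, hks⟩
    · exact ⟨N, hN, N.lt_succ_self, h, hs.2⟩

lemma continuousOn_update_right {E : Type*} [TopologicalSpace E] {f : ℝ → E} {a b : ℝ} {l : E}
    (hf : ContinuousOn f (Ico a b)) (hl : Tendsto f (𝓝[<] b) (𝓝 l)) :
    ContinuousOn (Function.update f b l) (Icc a b) := by
  rw [continuousOn_update_iff, Icc_sdiff_right]
  exact ⟨hf, fun _ => hl.mono_left (nhdsWithin_mono b fun _ hs => hs.2)⟩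

namespace PiecewiseContinuous

variable {E F H : Type*} {j k N : ℕ} {tp : ℕ → ℝ} {a b s : ℝ}

section Topological

variable [TopologicalSpace E] [TopologicalSpace F] [TopologicalSpace H] {f : ℝ → E} {g : ℝ → F}

lemma mono (hf : PiecewiseContinuous j N tp f) (hjk : j ≤ k) : PiecewiseContinuous k N tp f :=
  fun i hi hiN => hf i (hjk.trans hi) hiN

lemma of_continuousOn (htp : MonotoneOn tp (Iic N)) (hf : ContinuousOn f (Icc (tp j) (tp N))) :
    PiecewiseContinuous j N tp f := fun _ hk hkN =>
  ⟨f, hf.mono (Icc_subset_Icc (htp (hk.trans hkN.le) hkN.le hk) (htp hkN self_mem_Iic hkN)),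
    eqOn_refl _ _⟩

lemma of_tendsto (hf : ∀ k < N, ContinuousOn f (Ico (tp k) (tp (k + 1))))
    (hl : ∀ k < N, ∃ l, Tendsto f (𝓝[<] tp (k + 1)) (𝓝 l)) : PiecewiseContinuous 0 N tp f := by
  rintro k - hk
  obtain ⟨l, hl⟩ := hl k hk
  exact ⟨Function.update f (tp (k + 1)) l, continuousOn_update_right (hf k hk) hl,
    fun s hs => (Function.update_of_ne hs.2.ne _ _).symm⟩

lemma comp (hf : PiecewiseContinuous j N tp f) {φ : E → F} (hφ : Continuous φ) :
    PiecewiseContinuous j N tp fun s => φ (f s) := by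
  intro k hk hkN
  obtain ⟨f₁, hf₁, hff₁⟩ := hf k hk hkN
  exact ⟨fun s => φ (f₁ s), hφ.comp_continuousOn hf₁, fun s hs => congrArg φ (hff₁ hs)⟩

lemma comp₂ (hf : PiecewiseContinuous j N tp f) (hg : PiecewiseContinuous j N tp g)
    {φ : E → F → H} (hφ : Continuous fun p : E × F => φ p.1 p.2) :
    PiecewiseContinuous j N tp fun s => φ (f s) (g s) := by
  intro k hk hkN
  obtain ⟨f₁, hf₁, hff₁⟩ := hf k hk hkN
  obtain ⟨g₁, hg₁, hgg₁⟩ := hg k hk hkN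
  exact ⟨fun s => φ (f₁ s) (g₁ s), hφ.comp_continuousOn (hf₁.prodMk hg₁),
    fun s hs => congrArg₂ φ (hff₁ hs) (hgg₁ hs)⟩

lemma continuousWithinAt_Ici (hf : PiecewiseContinuous j N tp f) (hjN : j ≤ N)
    (hs : s ∈ Ico (tp j) (tp N)) : ContinuousWithinAt f (Ici s) s := by
  obtain ⟨k, hjk, hkN, hks⟩ := exists_mem_Ico_succ_of_mem_Ico hjN hs
  obtain ⟨g, hg, hfg⟩ := hf k hjk hkN
  have hgs : ContinuousWithinAt g (Ico s (tp (k + 1))) s :=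
    (hg s (Ico_subset_Icc_self hks)).mono fun r hr => ⟨hks.1.trans hr.1, hr.2.le⟩
  exact (hgs.congr (fun r hr => hfg ⟨hks.1.trans hr.1, hr.2⟩) (hfg hks)).mono_of_mem_nhdsWithin
    (Ico_mem_nhdsGE hks.2)

lemma continuousAt (hf : PiecewiseContinuous j N tp f) (hjk : j ≤ k) (hkN : k < N)
    (hs : s ∈ Ioo (tp k) (tp (k + 1))) : ContinuousAt f s := by
  obtain ⟨g, hg, hfg⟩ := hf k hjk hkN
  exact ((hg.mono Ioo_subset_Icc_self).congr fun r hr =>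
    hfg (Ioo_subset_Ico_self hr)).continuousAt (Ioo_mem_nhds hs.1 hs.2)

end Topological

section Matrix

variable {l m n : Type*} {f : ℝ → Matrix l m ℝ}

lemma matrix_mul [Fintype m] {g : ℝ → Matrix m n ℝ} (hf : PiecewiseContinuous j N tp f)
    (hg : PiecewiseContinuous j N tp g) : PiecewiseContinuous j N tp fun s => f s * g s :=
  hf.comp₂ hg (continuous_fst.matrix_mul continuous_snd)

lemma matrix_transpose (hf : PiecewiseContinuous j N tp f) :
    PiecewiseContinuous j N tp fun s => (f s)ᵀ :=
  hf.comp continuous_id.matrix_transpose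

lemma transpose_mul_mul [Fintype l] {w : ℝ → Matrix l l ℝ} (hf : PiecewiseContinuous j N tp f)
    (hw : PiecewiseContinuous j N tp w) : PiecewiseContinuous j N tp fun s => (f s)ᵀ * w s * f s :=
  (hf.matrix_transpose.matrix_mul hw).matrix_mul hf

end Matrix

variable [NormedAddCommGroup E] {f : ℝ → E}

lemma exists_norm_le (hf : PiecewiseContinuous j N tp f) (hjN : j ≤ N) :
    ∃ K, ∀ s ∈ Ico (tp j) (tp N), ‖f s‖ ≤ K := by
  have hpiece : ∀ k ∈ Ico j N, Bornology.IsBounded (f '' Ico (tp k) (tp (k + 1))) := by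
    intro k hk
    obtain ⟨g, hg, hfg⟩ := hf k hk.1 hk.2
    rw [hfg.image_eq]
    exact (isCompact_Icc.image_of_continuousOn hg).isBounded.subset
      (image_mono Ico_subset_Icc_self)
  obtain ⟨K, hK⟩ :=
    ((Bornology.isBounded_biUnion (finite_Ico j N)).2 hpiece).exists_norm_le
  refine ⟨K, fun s hs => hK _ ?_⟩
  obtain ⟨k, hjk, hkN, hks⟩ := exists_mem_Ico_succ_of_mem_Ico hjN hs
  exact mem_biUnion (⟨hjk, hkN⟩ : k ∈ Ico j N) (mem_image_of_mem f hks)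

lemma intervalIntegrable (hf : PiecewiseContinuous j N tp f) (hjN : j ≤ N)
    (htp : MonotoneOn tp (Iic N)) : IntervalIntegrable f volume (tp j) (tp N) := by
  refine IntervalIntegrable.trans_iterate_Ico hjN fun k hk => ?_
  obtain ⟨g, hg, hfg⟩ := hf k hk.1 hk.2
  rw [intervalIntegrable_iff_integrableOn_Ico_of_le (htp hk.2.le hk.2 k.le_succ)]
  exact (hg.integrableOn_Icc.mono_set Ico_subset_Icc_self).congr_fun hfg.symm measurableSet_Ico

lemma intervalIntegrable_of_mem (hf : PiecewiseContinuous j N tp f) (hjN : j ≤ N)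
    (htp : MonotoneOn tp (Iic N)) (ha : a ∈ Icc (tp j) (tp N)) (hb : b ∈ Icc (tp j) (tp N)) :
    IntervalIntegrable f volume a b :=
  (hf.intervalIntegrable hjN htp).mono_set <| by
    rw [uIcc_of_le (htp hjN self_mem_Iic hjN)]
    exact uIcc_subset_Icc ha hb

lemma hasDerivAt_of_eq_add_integral [NormedSpace ℝ E] [CompleteSpace E] {X : ℝ → E} {X₀ : E}
    (hf : PiecewiseContinuous j N tp f) (htp : MonotoneOn tp (Iic N))
    (hX : ∀ s ∈ Icc (tp j) (tp N), X s = X₀ + ∫ r in s..(tp N), f r) (hjk : j ≤ k) (hkN : k < N)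
    (hs : s ∈ Ioo (tp k) (tp (k + 1))) : HasDerivAt X (-f s) s := by
  have hjN := hjk.trans hkN.le
  have hjs : tp j < s := (htp hjN hkN.le hjk).trans_lt hs.1
  have hsN : s < tp N := hs.2.trans_le (htp hkN self_mem_Iic hkN)
  have hmeas : StronglyMeasurableAtFilter f (𝓝 s) volume :=
    ⟨Ioc (tp j) (tp N), Ioc_mem_nhds hjs hsN,
      (hf.intervalIntegrable hjN htp).1.aestronglyMeasurable⟩
  have hint := hf.intervalIntegrable_of_mem hjN htp ⟨hjs.le, hsN.le⟩
    (right_mem_Icc.2 (hjs.trans hsN).le)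
  refine ((intervalIntegral.integral_hasDerivAt_left hint hmeas
    (hf.continuousAt hjk hkN hs)).const_add X₀).congr_of_eventuallyEq ?_
  filter_upwards [Icc_mem_nhds hjs hsN] with r hr using hX r hr

end PiecewiseContinuous

end PiecewiseContinuous

section Volterra

variable {E F : Type*} [NormedAddCommGroup E] [NormedSpace ℝ E] [NormedAddCommGroup F]
  [NormedSpace ℝ F] {a b D K : ℝ} {C : ℝ → E →L[ℝ] E} {Φ : ℝ → E} {Φ₀ : E}

lemma continuousOn_of_volterra (hΦ : ∀ s ∈ Icc a b, Φ s = Φ₀ + ∫ r in a..s, C r (Φ r))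
    (hab : a ≤ b) (hint : IntervalIntegrable (fun r => C r (Φ r)) volume a b) :
    ContinuousOn Φ (Icc a b) := by
  have hprim := intervalIntegral.continuousOn_primitive_interval' hint left_mem_uIcc
  rw [uIcc_of_le hab] at hprim
  exact (continuousOn_const.add hprim).congr hΦ

lemma hasDerivWithinAt_of_volterra [CompleteSpace E]
    (hΦ : ∀ s ∈ Icc a b, Φ s = Φ₀ + ∫ r in a..s, C r (Φ r))
    (hint : IntervalIntegrable (fun r => C r (Φ r)) volume a b)
    (hCc : ∀ s ∈ Ico a b, ContinuousWithinAt C (Ici s) s) {s : ℝ} (hs : s ∈ Ico a b) :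
    HasDerivWithinAt Φ (C s (Φ s)) (Ici s) s := by
  have hab : a ≤ b := hs.1.trans hs.2.le
  have hIcc : Icc a b ∈ 𝓝[≥] s :=
    mem_of_superset (Icc_mem_nhdsGE hs.2) (Icc_subset_Icc_left hs.1)
  have hΦs : ContinuousWithinAt Φ (Ici s) s :=
    (continuousOn_of_volterra hΦ hab hint s (Ico_subset_Icc_self hs)).mono_of_mem_nhdsWithin hIcc
  have hmeas : StronglyMeasurableAtFilter (fun r => C r (Φ r)) (𝓝[>] s) volume :=
    ⟨Ioc s b, Ioc_mem_nhdsGT hs.2,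
      ((intervalIntegrable_iff_integrableOn_Ioc_of_le hab).1 hint).aestronglyMeasurable.mono_set
        (Ioc_subset_Ioc_left hs.1)⟩
  have hint' : IntervalIntegrable (fun r => C r (Φ r)) volume a s :=
    hint.mono_set (uIcc_subset_uIcc_left (by rw [uIcc_of_le hab]; exact Ico_subset_Icc_self hs))
  have hderiv := intervalIntegral.integral_hasDerivWithinAt_right (s := Ici s) (t := Ioi s) hint'
    hmeas (((hCc s hs).clm_apply hΦs).mono Ioi_subset_Ici_self)
  refine (hderiv.const_add Φ₀).congr_of_eventuallyEq ?_ (hΦ s (Ico_subset_Icc_self hs))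
  filter_upwards [hIcc] with r hr using hΦ r hr

lemma norm_le_of_volterra [CompleteSpace E]
    (hΦ : ∀ s ∈ Icc a b, Φ s = Φ₀ + ∫ r in a..s, C r (Φ r)) (hab : a ≤ b)
    (hint : IntervalIntegrable (fun r => C r (Φ r)) volume a b)
    (hCc : ∀ s ∈ Ico a b, ContinuousWithinAt C (Ici s) s) (hCK : ∀ s ∈ Ico a b, ‖C s‖ ≤ K) :
    ‖Φ b‖ ≤ ‖Φ₀‖ * Real.exp (K * (b - a)) := by
  have hgronwall := norm_le_gronwallBound_of_norm_deriv_right_le (δ := ‖Φ₀‖) (K := K) (ε := 0)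
    (continuousOn_of_volterra hΦ hab hint)
    (fun s hs => hasDerivWithinAt_of_volterra hΦ hint hCc hs)
    (by rw [hΦ a (left_mem_Icc.2 hab), intervalIntegral.integral_same, add_zero])
    (fun s hs => ((C s).le_of_opNorm_le (hCK s hs) (Φ s)).trans (add_zero _).ge) b
    (right_mem_Icc.2 hab)
  rwa [gronwallBound_ε0] at hgronwall

lemma integrableOn_clm_apply {C : ℝ → E →L[ℝ] F} {s : Set ℝ} (hs : MeasurableSet s)
    (hC : IntegrableOn C s) (hΦ : AEStronglyMeasurable Φ (volume.restrict s))
    (hD : ∀ t ∈ s, ‖Φ t‖ ≤ D) : IntegrableOn (fun t => C t (Φ t)) s := by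
  refine Integrable.mono' (hC.norm.mul_const D)
    (isBoundedBilinearMap_apply.continuous.comp_aestronglyMeasurable
      (hC.aestronglyMeasurable.prodMk hΦ)) (ae_restrict_of_forall_mem hs fun t ht => ?_)
  exact (C t).le_opNorm_of_le (hD t ht)

lemma continuousOn_Ico_of_volterra (hΦ : ∀ s ∈ Ico a b, Φ s = Φ₀ + ∫ r in a..s, C r (Φ r))
    (hint : ∀ s ∈ Ico a b, IntervalIntegrable (fun r => C r (Φ r)) volume a s) :
    ContinuousOn Φ (Ico a b) := by
  intro s hs
  obtain ⟨u, hsu, hub⟩ := exists_between hs.2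
  have hu : u ∈ Ico a b := ⟨hs.1.trans hsu.le, hub⟩
  have hcont := continuousOn_of_volterra (fun r hr => hΦ r ⟨hr.1, hr.2.trans_lt hub⟩) hu.1
    (hint u hu)
  refine (hcont s ⟨hs.1, hsu.le⟩).mono_of_mem_nhdsWithin ?_
  filter_upwards [self_mem_nhdsWithin, mem_nhdsWithin_of_mem_nhds (Iic_mem_nhds hsu)]
    with r hr hru using ⟨hr.1, hru⟩

lemma integrableOn_Ico_of_volterra [CompleteSpace E]
    (hΦ : ∀ s ∈ Ico a b, Φ s = Φ₀ + ∫ r in a..s, C r (Φ r))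
    (hint : ∀ s ∈ Ico a b, IntervalIntegrable (fun r => C r (Φ r)) volume a s)
    (hC : IntegrableOn C (Ico a b)) (hCc : ∀ s ∈ Ico a b, ContinuousWithinAt C (Ici s) s)
    (hCK : ∀ s ∈ Ico a b, ‖C s‖ ≤ K) : IntegrableOn (fun r => C r (Φ r)) (Ico a b) := by
  refine integrableOn_clm_apply measurableSet_Ico hC
    ((continuousOn_Ico_of_volterra hΦ hint).aestronglyMeasurable measurableSet_Ico)
    (D := ‖Φ₀‖ * Real.exp (K * (b - a))) fun s hs => ?_
  have hK : 0 ≤ K := (norm_nonneg _).trans (hCK s hs)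
  calc ‖Φ s‖ ≤ ‖Φ₀‖ * Real.exp (K * (s - a)) :=
        norm_le_of_volterra (fun r hr => hΦ r ⟨hr.1, hr.2.trans_lt hs.2⟩) hs.1 (hint s hs)
          (fun r hr => hCc r ⟨hr.1, hr.2.trans hs.2⟩) (fun r hr => hCK r ⟨hr.1, hr.2.trans hs.2⟩)
    _ ≤ ‖Φ₀‖ * Real.exp (K * (b - a)) := by
        gcongr
        exact hs.2.le

-- Integrability is not part of the equation: a non-integrable integrand has integral `0`. It holds
-- up to the supremum `σ` of the times where it holds by Gronwall's bound, and beyond `σ` the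
-- equation would read `Φ = Φ₀`, which makes the integrand integrable there as well.
lemma intervalIntegrable_of_volterra [CompleteSpace E]
    (hΦ : ∀ s ∈ Icc a b, Φ s = Φ₀ + ∫ r in a..s, C r (Φ r)) (hab : a ≤ b)
    (hC : IntervalIntegrable C volume a b) (hCc : ∀ s ∈ Ico a b, ContinuousWithinAt C (Ici s) s)
    (hCK : ∀ s ∈ Ico a b, ‖C s‖ ≤ K) : IntervalIntegrable (fun r => C r (Φ r)) volume a b := by
  set S : Set ℝ := {s | s ∈ Icc a b ∧ IntervalIntegrable (fun r => C r (Φ r)) volume a s} with hS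
  have haS : a ∈ S := ⟨left_mem_Icc.2 hab, IntervalIntegrable.refl⟩
  have hSb : BddAbove S := ⟨b, fun s hs => hs.1.2⟩
  set σ := sSup S
  have haσ : a ≤ σ := le_csSup hSb haS
  have hσb : σ ≤ b := csSup_le ⟨a, haS⟩ fun s hs => hs.1.2
  rw [intervalIntegrable_iff_integrableOn_Ico_of_le hab] at hC ⊢
  have hleft : IntegrableOn (fun r => C r (Φ r)) (Ico a σ) := by
    have hsub : Ico a σ ⊆ Ico a b := Ico_subset_Ico_right hσb
    refine integrableOn_Ico_of_volterra (fun s hs => hΦ s (Ico_subset_Icc_self (hsub hs)))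
      (fun s hs => ?_) (hC.mono_set hsub) (fun s hs => hCc s (hsub hs)) fun s hs => hCK s (hsub hs)
    obtain ⟨u, hu, hsu⟩ := exists_lt_of_lt_csSup ⟨a, haS⟩ hs.2
    exact hu.2.mono_set
      (uIcc_subset_uIcc_left (by rw [uIcc_of_le hu.1.1]; exact ⟨hs.1, hsu.le⟩))
  have hright : IntegrableOn (fun r => C r (Φ r)) (Ioo σ b) := by
    have hsub : Ioo σ b ⊆ Ico a b := fun s hs => ⟨haσ.trans hs.1.le, hs.2⟩
    have hconst : EqOn (fun r => C r Φ₀) (fun r => C r (Φ r)) (Ioo σ b) := by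
      intro s hs
      have hsI : s ∈ Icc a b := Ico_subset_Icc_self (hsub hs)
      have hns : ¬ IntervalIntegrable (fun r => C r (Φ r)) volume a s := fun hi =>
        hs.1.not_ge (le_csSup hSb ⟨hsI, hi⟩)
      change C s Φ₀ = C s (Φ s)
      rw [hΦ s hsI, intervalIntegral.integral_undef hns, add_zero]
    exact (integrableOn_clm_apply measurableSet_Ioo (hC.mono_set hsub)
      aestronglyMeasurable_const fun _ _ => le_rfl).congr_fun hconst measurableSet_Ioo
  exact (hleft.union ((integrableOn_Ico_iff_integrableOn_Ioo (by simp)).2 hright)).mono_set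
    Ico_subset_Ico_union_Ico

lemma intervalIntegrable_of_piecewise_volterra [CompleteSpace E] (B : F →L[ℝ] E →L[ℝ] E)
    {j N : ℕ} {tp : ℕ → ℝ} {C : ℝ → F} (hC : PiecewiseContinuous j N tp C) (hjN : j ≤ N)
    (htp : MonotoneOn tp (Iic N))
    (hΦ : ∀ s ∈ Icc (tp j) (tp N), Φ s = Φ₀ + ∫ r in (tp j)..s, B (C r) (Φ r)) :
    IntervalIntegrable (fun r => B (C r) (Φ r)) volume (tp j) (tp N) := by
  have hBC : PiecewiseContinuous j N tp fun s => B (C s) := hC.comp B.continuous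
  obtain ⟨K, hK⟩ := hBC.exists_norm_le hjN
  exact intervalIntegrable_of_volterra hΦ (htp hjN self_mem_Iic hjN)
    (hBC.intervalIntegrable hjN htp) (fun s hs => hBC.continuousWithinAt_Ici hjN hs) hK

end Volterra

section MatrixVolterra

variable {m n : Type*} [Fintype m] [Fintype n] {i j N : ℕ} {tp : ℕ → ℝ} {C : ℝ → Matrix m m ℝ}
  {Φ : ℝ → Matrix m n ℝ} {Φ₀ : Matrix m n ℝ}

lemma continuousOn_of_matrix_volterra (hC : PiecewiseContinuous j N tp C) (hjN : j ≤ N)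
    (htp : MonotoneOn tp (Iic N))
    (hΦ : ∀ s ∈ Icc (tp j) (tp N), Φ s = Φ₀ + ∫ r in (tp j)..s, C r * Φ r) :
    ContinuousOn Φ (Icc (tp j) (tp N)) := by
  exact continuousOn_of_volterra (C := fun r => mulCLM m m n (C r)) hΦ
    (htp hjN self_mem_Iic hjN)
    (intervalIntegrable_of_piecewise_volterra (mulCLM m m n) hC hjN htp hΦ)

lemma hasDerivWithinAt_of_matrix_volterra (hC : PiecewiseContinuous j N tp C) (hjN : j ≤ N)
    (htp : MonotoneOn tp (Iic N))
    (hΦ : ∀ s ∈ Icc (tp j) (tp N), Φ s = Φ₀ + ∫ r in (tp j)..s, C r * Φ r) {s : ℝ}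
    (hs : s ∈ Ico (tp j) (tp N)) : HasDerivWithinAt Φ (C s * Φ s) (Ici s) s := by
  exact hasDerivWithinAt_of_volterra (C := fun r => mulCLM m m n (C r)) hΦ
    (intervalIntegrable_of_piecewise_volterra (mulCLM m m n) hC hjN htp hΦ)
    (fun s hs => (hC.comp (mulCLM m m n).continuous).continuousWithinAt_Ici hjN hs) hs

-- Both sides solve the same linear differential equation from `t_i` on.
lemma matrix_volterra_eq_mul [DecidableEq m] {Ψ : ℝ → Matrix m m ℝ}
    (hC : PiecewiseContinuous j N tp C) (hji : j ≤ i) (hiN : i ≤ N) (htp : MonotoneOn tp (Iic N))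
    (hΦ : ∀ s ∈ Icc (tp j) (tp N), Φ s = Φ₀ + ∫ r in (tp j)..s, C r * Φ r)
    (hΨ : ∀ s ∈ Icc (tp i) (tp N), Ψ s = 1 + ∫ r in (tp i)..s, C r * Ψ r) :
    ∀ s ∈ Icc (tp i) (tp N), Φ s = Ψ s * Φ (tp i) := by
  have hjN := hji.trans hiN
  have hle : tp j ≤ tp i := htp hjN hiN hji
  obtain ⟨K, hK⟩ := hC.exists_norm_le hjN
  have hzero := eq_zero_of_abs_deriv_le_mul_abs_self_of_eq_zero_right
    (f := fun s => Φ s - Ψ s * Φ (tp i)) (f' := fun s => C s * (Φ s - Ψ s * Φ (tp i)))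
    (K := Fintype.card m * K) (a := tp i) (b := tp N)
    (((continuousOn_of_matrix_volterra hC hjN htp hΦ).mono (Icc_subset_Icc_left hle)).sub
      (continuousOn_mul (continuousOn_of_matrix_volterra (hC.mono hji) hiN htp hΨ)
        continuousOn_const))
    (fun s hs => ?deriv) ?init (fun s hs => ?bound)
  case deriv =>
    refine ((hasDerivWithinAt_of_matrix_volterra hC hjN htp hΦ ⟨hle.trans hs.1, hs.2⟩).sub
      (hasDerivWithinAt_mul (hasDerivWithinAt_of_matrix_volterra (hC.mono hji) hiN htp hΨ hs)
        (hasDerivWithinAt_const s (Ici s) (Φ (tp i))))).congr_deriv ?_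
    rw [Matrix.mul_zero, zero_add, Matrix.mul_sub, Matrix.mul_assoc]
  case init =>
    simp [hΨ (tp i) (left_mem_Icc.2 (htp hiN self_mem_Iic hiN))]
  case bound =>
    refine (norm_mul_le_card_mul _ _).trans ?_
    gcongr
    exact hK s ⟨hle.trans hs.1, hs.2⟩
  exact fun s hs => sub_eq_zero.1 (hzero s hs)

end MatrixVolterra

section Cost

variable {m n : Type*} [Fintype m] {a b : ℝ} {i j k N : ℕ} {tp : ℕ → ℝ} {Φ : ℝ → Matrix m n ℝ}
  {W W' : ℝ → Matrix m m ℝ} {g g' : Matrix m m ℝ}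

/-- The cost on `[a, b]` of running cost `W` and terminal cost `g` along the linear flow `Φ`, as
the matrix of a quadratic form in the initial state. -/
noncomputable def cost [Fintype n] (a b : ℝ) (Φ : ℝ → Matrix m n ℝ) (W : ℝ → Matrix m m ℝ)
    (g : Matrix m m ℝ) : Matrix n n ℝ :=
  (Φ b)ᵀ * g * Φ b + ∫ s in a..b, (Φ s)ᵀ * W s * Φ s

variable [Fintype n]

lemma cost_nonneg (hab : a ≤ b) (hW : ∀ s ∈ Icc a b, 0 ≤ W s) (hg : 0 ≤ g) :
    0 ≤ cost a b Φ W g := by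
  refine add_nonneg (transpose_mul_mul_nonneg hg _) ?_
  rw [intervalIntegral.integral_of_le hab]
  exact integral_nonneg_of_ae <| ae_restrict_of_forall_mem measurableSet_Ioc fun s hs =>
    transpose_mul_mul_nonneg (hW s (Ioc_subset_Icc_self hs)) _

lemma cost_mono (hiN : i ≤ N) (htp : MonotoneOn tp (Iic N)) (hΦ : PiecewiseContinuous i N tp Φ)
    (hWc : PiecewiseContinuous i N tp W) (hWc' : PiecewiseContinuous i N tp W')
    (hW : ∀ s ∈ Icc (tp i) (tp N), W s ≤ W' s) (hg : g ≤ g') :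
    cost (tp i) (tp N) Φ W g ≤ cost (tp i) (tp N) Φ W' g' := by
  have hle := htp hiN self_mem_Iic hiN
  refine add_le_add (transpose_mul_mul_mono hg _) ?_
  rw [intervalIntegral.integral_of_le hle, intervalIntegral.integral_of_le hle]
  exact setIntegral_mono_on ((hΦ.transpose_mul_mul hWc).intervalIntegrable hiN htp).1
    ((hΦ.transpose_mul_mul hWc').intervalIntegrable hiN htp).1 measurableSet_Ioc fun s hs =>
    transpose_mul_mul_mono (hW s (Ioc_subset_Icc_self hs)) _

lemma cost_mul_right {Ψ : ℝ → Matrix m m ℝ} {u : Matrix m n ℝ} (hiN : i ≤ N)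
    (htp : MonotoneOn tp (Iic N)) (hΨ : PiecewiseContinuous i N tp Ψ)
    (hW : PiecewiseContinuous i N tp W) (hΦ : ∀ s ∈ Icc (tp i) (tp N), Φ s = Ψ s * u) :
    cost (tp i) (tp N) Φ W g = uᵀ * cost (tp i) (tp N) Ψ W g * u := by
  have hle := htp hiN self_mem_Iic hiN
  have hintegral : ∫ s in (tp i)..(tp N), (Φ s)ᵀ * W s * Φ s
      = uᵀ * (∫ s in (tp i)..(tp N), (Ψ s)ᵀ * W s * Ψ s) * u :=
    calc ∫ s in (tp i)..(tp N), (Φ s)ᵀ * W s * Φ s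
        = ∫ s in (tp i)..(tp N), (mulCLM n m n).flip u (mulCLM n m m uᵀ ((Ψ s)ᵀ * W s * Ψ s)) := by
          refine intervalIntegral.integral_congr fun s hs => ?_
          rw [uIcc_of_le hle] at hs
          change (Φ s)ᵀ * W s * Φ s = uᵀ * ((Ψ s)ᵀ * W s * Ψ s) * u
          simp only [hΦ s hs, transpose_mul, Matrix.mul_assoc]
      _ = uᵀ * (∫ s in (tp i)..(tp N), (Ψ s)ᵀ * W s * Ψ s) * u := by
          exact (((mulCLM n m n).flip u).comp (mulCLM n m m uᵀ)).intervalIntegral_comp_comm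
            ((hΨ.transpose_mul_mul hW).intervalIntegrable hiN htp)
  rw [cost, hintegral, hΦ (tp N) (right_mem_Icc.2 hle), cost]
  simp only [transpose_mul, Matrix.mul_add, Matrix.add_mul, Matrix.mul_assoc]

lemma cost_eq_integral_add_cost (hij : i ≤ j) (hjN : j ≤ N) (htp : MonotoneOn tp (Iic N))
    (hΦ : PiecewiseContinuous i N tp Φ) (hW : PiecewiseContinuous i N tp W) :
    cost (tp i) (tp N) Φ W g
      = (∫ s in (tp i)..(tp j), (Φ s)ᵀ * W s * Φ s) + cost (tp j) (tp N) Φ W g := by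
  have hiN := hij.trans hjN
  have hi := htp hiN hjN hij
  have hj := htp hjN self_mem_Iic hjN
  have hint := hΦ.transpose_mul_mul hW
  rw [cost, cost, ← intervalIntegral.integral_add_adjacent_intervals
    (hint.intervalIntegrable_of_mem hiN htp ⟨le_rfl, hi.trans hj⟩ ⟨hi, hj⟩)
    (hint.intervalIntegrable_of_mem hiN htp ⟨hi, hj⟩ ⟨hi.trans hj, le_rfl⟩), add_left_comm]

lemma integral_eq_sub_of_lyapunov {C P : ℝ → Matrix m m ℝ} {p : Matrix m m ℝ} (hkN : k < N)
    (htp : MonotoneOn tp (Iic N)) (hlt : tp k < tp (k + 1))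
    (hW : PiecewiseContinuous k N tp W) (hΦ : ContinuousOn Φ (Icc (tp k) (tp N)))
    (hΦ' : ∀ s ∈ Ico (tp k) (tp N), HasDerivWithinAt Φ (C s * Φ s) (Ici s) s)
    (hP : ContinuousOn P (Ico (tp k) (tp (k + 1))))
    (hP' : ∀ s ∈ Ioo (tp k) (tp (k + 1)),
      HasDerivAt P (-(P s * C s + (C s)ᵀ * P s + W s)) s)
    (hp : Tendsto P (𝓝[<] tp (k + 1)) (𝓝 p)) :
    ∫ s in (tp k)..(tp (k + 1)), (Φ s)ᵀ * W s * Φ s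
      = (Φ (tp k))ᵀ * P (tp k) * Φ (tp k) - (Φ (tp (k + 1)))ᵀ * p * Φ (tp (k + 1)) := by
  have hle : tp (k + 1) ≤ tp N := htp hkN self_mem_Iic hkN
  set P₁ := Function.update P (tp (k + 1)) p with hP₁
  have hP₁P : ∀ s < tp (k + 1), P₁ s = P s := fun s hs => Function.update_of_ne hs.ne _ _
  have hderiv : ∀ s ∈ Ioo (tp k) (tp (k + 1)),
      HasDerivWithinAt (fun s => -((Φ s)ᵀ * P₁ s * Φ s)) ((Φ s)ᵀ * W s * Φ s) (Ioi s) s := by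
    intro s hs
    have hΦs := (hΦ' s ⟨hs.1.le, hs.2.trans_le hle⟩).mono Ioi_subset_Ici_self
    have hP₁s : HasDerivAt P₁ (-(P s * C s + (C s)ᵀ * P s + W s)) s := by
      refine (hP' s hs).congr_of_eventuallyEq ?_
      filter_upwards [Iio_mem_nhds hs.2] with r hr using hP₁P r hr
    refine (hasDerivWithinAt_mul (hasDerivWithinAt_mul (hasDerivWithinAt_transpose hΦs)
      hP₁s.hasDerivWithinAt) hΦs).neg.congr_deriv ?_
    simp only [hP₁P s hs.2, transpose_mul, Matrix.mul_neg, Matrix.neg_mul, Matrix.mul_add,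
      Matrix.add_mul, Matrix.mul_assoc]
    abel
  have hΦk := hΦ.mono (Icc_subset_Icc_right hle)
  have hcont : ContinuousOn (fun s => -((Φ s)ᵀ * P₁ s * Φ s)) (Icc (tp k) (tp (k + 1))) :=
    (continuousOn_mul (continuousOn_mul (continuousOn_transpose hΦk)
      (continuousOn_update_right hP hp)) hΦk).neg
  have hint := ((PiecewiseContinuous.of_continuousOn htp hΦ).transpose_mul_mul
    hW).intervalIntegrable_of_mem hkN.le htp ⟨le_rfl, hlt.le.trans hle⟩ ⟨hlt.le, hle⟩
  rw [intervalIntegral.integral_eq_sub_of_hasDeriv_right_of_le hlt.le hcont hderiv hint,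
    hP₁P _ hlt, hP₁, Function.update_self, neg_sub_neg]

end Cost

section PiecewiseLyapunov

variable {n : Type*} [Fintype n] [DecidableEq n] {k N : ℕ} {tp : ℕ → ℝ} {C : ℝ → Matrix n n ℝ}
  {W : ℕ → ℝ → Matrix n n ℝ} {g : ℕ → Matrix n n ℝ} {Φ : ℕ → ℝ → Matrix n n ℝ}
  {P : ℝ → Matrix n n ℝ}

/-- A solution `P` of a piecewise linear Lyapunov equation with closed-loop coefficient `C`,
running costs `W k` and terminal costs `g k`, whose left limit at each node `t_{k+1}` is the cost of
continuing with the data `W k`, `g k` of the piece to its left. The flow `Φ k` of `C` from `t_k` is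
given by its integral equation, as in `IsPiecewiseRiccati`. -/
structure IsPiecewiseLyapunov (N : ℕ) (tp : ℕ → ℝ) (C : ℝ → Matrix n n ℝ)
    (W : ℕ → ℝ → Matrix n n ℝ) (g : ℕ → Matrix n n ℝ) (Φ : ℕ → ℝ → Matrix n n ℝ)
    (P : ℝ → Matrix n n ℝ) : Prop where
  lt_succ : ∀ k < N, tp k < tp (k + 1)
  coeff : PiecewiseContinuous 0 N tp C
  running : ∀ k < N, PiecewiseContinuous k N tp (W k)
  continuousOn : ∀ k < N, ContinuousOn P (Ico (tp k) (tp (k + 1)))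
  hasDerivAt : ∀ k < N, ∀ s ∈ Ioo (tp k) (tp (k + 1)),
    HasDerivAt P (-(P s * C s + (C s)ᵀ * P s + W k s)) s
  volterra : ∀ k ≤ N, ∀ s ∈ Icc (tp k) (tp N), Φ k s = 1 + ∫ r in (tp k)..s, C r * Φ k r
  tendsto : ∀ k < N, Tendsto P (𝓝[<] tp (k + 1))
    (𝓝 (cost (tp (k + 1)) (tp N) (Φ (k + 1)) (W k) (g k)))
  final : P (tp N) = g (N - 1)

namespace IsPiecewiseLyapunov

lemma monotoneOn (h : IsPiecewiseLyapunov N tp C W g Φ P) : MonotoneOn tp (Iic N) :=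
  (strictMonoOn_Iic_of_lt_succ h.lt_succ).monotoneOn

lemma continuousOn_flow (h : IsPiecewiseLyapunov N tp C W g Φ P) (hk : k ≤ N) :
    ContinuousOn (Φ k) (Icc (tp k) (tp N)) :=
  continuousOn_of_matrix_volterra (h.coeff.mono k.zero_le) hk h.monotoneOn (h.volterra k hk)

lemma piecewiseContinuous_flow (h : IsPiecewiseLyapunov N tp C W g Φ P) (hk : k ≤ N) :
    PiecewiseContinuous k N tp (Φ k) :=
  .of_continuousOn h.monotoneOn (h.continuousOn_flow hk)

lemma flow_apply_self (h : IsPiecewiseLyapunov N tp C W g Φ P) (hk : k ≤ N) : Φ k (tp k) = 1 := by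
  rw [h.volterra k hk _ (left_mem_Icc.2 (h.monotoneOn hk self_mem_Iic hk)),
    intervalIntegral.integral_same, add_zero]

lemma apply_eq_cost (h : IsPiecewiseLyapunov N tp C W g Φ P) (hk : k < N) :
    P (tp k) = cost (tp k) (tp N) (Φ k) (W k) (g k) := by
  have htp := h.monotoneOn
  have htail : cost (tp (k + 1)) (tp N) (Φ k) (W k) (g k)
      = (Φ k (tp (k + 1)))ᵀ * cost (tp (k + 1)) (tp N) (Φ (k + 1)) (W k) (g k)
        * Φ k (tp (k + 1)) :=
    cost_mul_right hk htp (h.piecewiseContinuous_flow hk) ((h.running k hk).mono k.le_succ)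
      (matrix_volterra_eq_mul (h.coeff.mono k.zero_le) k.le_succ hk htp (h.volterra k hk.le)
        (h.volterra (k + 1) hk))
  have hpiece := integral_eq_sub_of_lyapunov hk htp (h.lt_succ k hk) (h.running k hk)
    (h.continuousOn_flow hk.le)
    (fun s hs => hasDerivWithinAt_of_matrix_volterra (h.coeff.mono k.zero_le) hk.le htp
      (h.volterra k hk.le) hs)
    (h.continuousOn k hk) (h.hasDerivAt k hk) (h.tendsto k hk)
  rw [cost_eq_integral_add_cost k.le_succ hk htp (h.piecewiseContinuous_flow hk.le)
    (h.running k hk), hpiece, htail, h.flow_apply_self hk.le, sub_add_cancel, transpose_one,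
    Matrix.one_mul, Matrix.mul_one]

lemma leftLimit_le (h : IsPiecewiseLyapunov N tp C W g Φ P)
    (hWm : ∀ k, k + 1 < N → ∀ s ∈ Icc (tp (k + 1)) (tp N), W k s ≤ W (k + 1) s)
    (hgm : ∀ k, k + 1 < N → g k ≤ g (k + 1)) (hk : k < N) :
    cost (tp (k + 1)) (tp N) (Φ (k + 1)) (W k) (g k) ≤ P (tp (k + 1)) := by
  rcases (Nat.succ_le_of_lt hk).eq_or_lt with rfl | hk'
  · rw [cost, intervalIntegral.integral_same, h.flow_apply_self le_rfl, h.final]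
    simp
  · rw [h.apply_eq_cost hk']
    exact cost_mono hk h.monotoneOn (h.piecewiseContinuous_flow hk)
      ((h.running k hk).mono k.le_succ) (h.running (k + 1) hk') (hWm k hk') (hgm k hk')

lemma nonneg (h : IsPiecewiseLyapunov N tp C W g Φ P) (hN : 0 < N)
    (hW : ∀ k < N, ∀ s ∈ Icc (tp k) (tp N), 0 ≤ W k s) (hg : ∀ k < N, 0 ≤ g k) :
    ∀ t ∈ Icc (tp 0) (tp N), 0 ≤ P t := by
  have htp := h.monotoneOn
  obtain ⟨K, hK⟩ := h.coeff.exists_norm_le N.zero_le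
  intro t ht
  rcases ht.2.eq_or_lt with rfl | htN
  · rw [h.final]
    exact hg _ (Nat.sub_lt hN one_pos)
  obtain ⟨k, -, hk, htk⟩ := exists_mem_Ico_succ_of_mem_Ico N.zero_le ⟨ht.1, htN⟩
  have hle : tp (k + 1) ≤ tp N := htp hk self_mem_Iic hk
  refine nonneg_of_lyapunov (M := C) (C := K) (h.continuousOn k hk) (h.hasDerivAt k hk)
    (fun s hs => ?_) (fun s hs => ?_) (h.tendsto k hk)
    (cost_nonneg hle (fun s hs => hW k hk s ⟨(h.lt_succ k hk).le.trans hs.1, hs.2⟩) (hg k hk)) t htk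
  · calc -(P s * C s + (C s)ᵀ * P s + W k s) + P s * C s + (C s)ᵀ * P s = -W k s := by abel
      _ ≤ 0 := neg_nonpos.2 (hW k hk s ⟨hs.1.le, hs.2.le.trans hle⟩)
  · exact hK s ⟨(htp N.zero_le hk.le k.zero_le).trans hs.1.le, hs.2.trans_le hle⟩

-- Time runs backwards from `t_{k+1}`, where `P` jumps down to its left limit.
lemma le_on_piece (h : IsPiecewiseLyapunov N tp C W g Φ P) {A X X' : ℝ → Matrix n n ℝ} {K : ℝ}
    (hWm : ∀ k, k + 1 < N → ∀ s ∈ Icc (tp (k + 1)) (tp N), W k s ≤ W (k + 1) s)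
    (hgm : ∀ k, k + 1 < N → g k ≤ g (k + 1)) (hk : k < N)
    (hA : ∀ s ∈ Ioo (tp k) (tp (k + 1)), ‖A s‖ ≤ K)
    (hX : ContinuousOn X (Icc (tp k) (tp (k + 1))))
    (hX' : ∀ s ∈ Ioo (tp k) (tp (k + 1)), HasDerivAt X (X' s) s)
    (hsuper : ∀ s ∈ Ioo (tp k) (tp (k + 1)),
      X' s + X s * A s + (A s)ᵀ * X s ≤ P s * (A s - C s) + (A s - C s)ᵀ * P s - W k s)
    (hnode : P (tp (k + 1)) ≤ X (tp (k + 1))) : ∀ t ∈ Ico (tp k) (tp (k + 1)), P t ≤ X t := by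
  have hlt := h.lt_succ k hk
  have hXlim : Tendsto X (𝓝[<] tp (k + 1)) (𝓝 (X (tp (k + 1)))) := by
    refine Tendsto.mono_left (hX _ (right_mem_Icc.2 hlt.le)) ?_
    rw [← nhdsWithin_Ioo_eq_nhdsLT hlt]
    exact nhdsWithin_mono _ Ioo_subset_Icc_self
  intro t ht
  refine sub_nonneg.1 (nonneg_of_lyapunov (X := fun s => X s - P s) (M := A)
    ((hX.mono Ico_subset_Icc_self).sub (h.continuousOn k hk))
    (fun s hs => (hX' s hs).sub (h.hasDerivAt k hk s hs)) (fun s hs => ?_) hA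
    (hXlim.sub (h.tendsto k hk))
    (sub_nonneg.2 ((h.leftLimit_le hWm hgm hk).trans hnode)) t ht)
  calc X' s - -(P s * C s + (C s)ᵀ * P s + W k s) + (X s - P s) * A s + (A s)ᵀ * (X s - P s)
      = X' s + X s * A s + (A s)ᵀ * X s
        - (P s * (A s - C s) + (A s - C s)ᵀ * P s - W k s) := by
        rw [transpose_sub]
        noncomm_ring
    _ ≤ 0 := sub_nonpos.2 (hsuper s hs)

lemma le_of_supersolution (h : IsPiecewiseLyapunov N tp C W g Φ P) {A X X' : ℝ → Matrix n n ℝ}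
    (hWm : ∀ k, k + 1 < N → ∀ s ∈ Icc (tp (k + 1)) (tp N), W k s ≤ W (k + 1) s)
    (hgm : ∀ k, k + 1 < N → g k ≤ g (k + 1)) (hA : PiecewiseContinuous 0 N tp A)
    (hX : ContinuousOn X (Icc (tp 0) (tp N)))
    (hX' : ∀ k < N, ∀ s ∈ Ioo (tp k) (tp (k + 1)), HasDerivAt X (X' s) s)
    (hsuper : ∀ k < N, ∀ s ∈ Ioo (tp k) (tp (k + 1)),
      X' s + X s * A s + (A s)ᵀ * X s ≤ P s * (A s - C s) + (A s - C s)ᵀ * P s - W k s)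
    (hend : g (N - 1) ≤ X (tp N)) : ∀ t ∈ Icc (tp 0) (tp N), P t ≤ X t := by
  have htp := h.monotoneOn
  obtain ⟨K, hK⟩ := hA.exists_norm_le N.zero_le
  have hpiece : ∀ k < N, P (tp (k + 1)) ≤ X (tp (k + 1)) →
      ∀ t ∈ Ico (tp k) (tp (k + 1)), P t ≤ X t := by
    intro k hk
    have h0 : tp 0 ≤ tp k := htp N.zero_le hk.le k.zero_le
    have hN : tp (k + 1) ≤ tp N := htp hk self_mem_Iic hk
    exact h.le_on_piece hWm hgm hk (fun s hs => hK s ⟨h0.trans hs.1.le, hs.2.trans_le hN⟩)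
      (hX.mono (Icc_subset_Icc h0 hN)) (hX' k hk) (hsuper k hk)
  have hnode : ∀ k ≤ N, P (tp k) ≤ X (tp k) := by
    intro k hk
    induction hk using Nat.decreasingInduction with
    | self => rwa [h.final]
    | of_succ k hk ih => exact hpiece k hk ih _ (left_mem_Ico.2 (h.lt_succ k hk))
  intro t ht
  rcases ht.2.eq_or_lt with rfl | htN
  · exact hnode N le_rfl
  · obtain ⟨k, -, hk, htk⟩ := exists_mem_Ico_succ_of_mem_Ico N.zero_le ⟨ht.1, htN⟩
    exact hpiece k hk (hnode (k + 1) hk) t htk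

end IsPiecewiseLyapunov

end PiecewiseLyapunov

section ClosedLoop

variable {m n : Type*} [Fintype m]

/-- The running cost `xᵀQx + uᵀRu` under the control `u = -Kx`, as the matrix of a quadratic form
in the state. -/
def closedLoopCost (q : Matrix n n ℝ) (r : Matrix m m ℝ) (κ : Matrix m n ℝ) : Matrix n n ℝ :=
  q + κᵀ * r * κ

lemma closedLoopCost_nonneg [Finite n] {q : Matrix n n ℝ} {r : Matrix m m ℝ} (hq : 0 ≤ q)
    (hr : 0 ≤ r) (κ : Matrix m n ℝ) : 0 ≤ closedLoopCost q r κ :=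
  add_nonneg hq (transpose_mul_mul_nonneg hr κ)

lemma closedLoopCost_mono [Finite n] {q q' : Matrix n n ℝ} {r r' : Matrix m m ℝ} (hq : q ≤ q')
    (hr : r ≤ r') (κ : Matrix m n ℝ) : closedLoopCost q r κ ≤ closedLoopCost q' r' κ :=
  add_le_add hq (transpose_mul_mul_mono hr κ)

variable [DecidableEq m]

/-- The gain `R⁻¹BᵀP` of the feedback control `u = -R⁻¹BᵀP x`. -/
noncomputable def feedback [Fintype n] (b : Matrix n m ℝ) (r : Matrix m m ℝ) (p : Matrix n n ℝ) :
    Matrix m n ℝ :=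
  r⁻¹ * bᵀ * p

/-- The coefficient `A - BR⁻¹BᵀP` of the state equation under the control `u = -R⁻¹BᵀP x`. -/
noncomputable def closedLoop [Fintype n] (a : Matrix n n ℝ) (b : Matrix n m ℝ) (r : Matrix m m ℝ)
    (p : Matrix n n ℝ) : Matrix n n ℝ :=
  a - b * r⁻¹ * bᵀ * p

lemma transpose_inv_of_posDef {r : Matrix m m ℝ} (hr : r.PosDef) : (r⁻¹)ᵀ = r⁻¹ :=
  transpose_eq_of_nonneg hr.posSemidef.inv.nonneg

lemma continuousOn_inv_of_posDef {X : Type*} [TopologicalSpace X] {f : X → Matrix m m ℝ} {s : Set X}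
    (hf : ContinuousOn f s) (hpos : ∀ x ∈ s, (f x).PosDef) :
    ContinuousOn (fun x => (f x)⁻¹) s := fun x hx =>
  (continuousAt_matrix_inv (f x) (by
    rw [Ring.inverse_eq_inv']
    exact continuousAt_inv₀ (hpos x hx).det_pos.ne')).comp_continuousWithinAt (hf x hx)

variable [Fintype n] {a q p : Matrix n n ℝ} {b : Matrix n m ℝ} {r : Matrix m m ℝ}

lemma closedLoopCost_feedback (hr : r.PosDef) :
    closedLoopCost q r (feedback b r p) = q + pᵀ * (b * r⁻¹ * bᵀ) * p := by
  have hone : r * r⁻¹ = 1 := mul_nonsing_inv _ hr.det_pos.ne'.isUnit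
  simp only [closedLoopCost, feedback, transpose_mul, transpose_transpose,
    transpose_inv_of_posDef hr, Matrix.mul_assoc]
  rw [← Matrix.mul_assoc r, hone, Matrix.one_mul]

lemma riccati_eq_lyapunov_closedLoop (hr : r.PosDef) :
    p * a + aᵀ * p + q - p * b * r⁻¹ * bᵀ * p
      = p * closedLoop a b r p + (closedLoop a b r p)ᵀ * p
        + closedLoopCost q r (feedback b r p) := by
  rw [closedLoopCost_feedback hr]
  simp only [closedLoop, transpose_sub, transpose_mul, transpose_transpose,
    transpose_inv_of_posDef hr, Matrix.mul_sub, Matrix.sub_mul, Matrix.mul_assoc]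
  abel

lemma neg_le_sub_closedLoopCost (hr : r.PosDef) (hp : 0 ≤ p) :
    -q ≤ p * (a - closedLoop a b r p) + (a - closedLoop a b r p)ᵀ * p
      - closedLoopCost q r (feedback b r p) :=
  calc -q ≤ -q + (bᵀ * p)ᵀ * r⁻¹ * (bᵀ * p) :=
        le_add_of_nonneg_right (transpose_mul_mul_nonneg hr.posSemidef.inv.nonneg _)
    _ = _ := by
        rw [closedLoopCost_feedback hr]
        simp only [closedLoop, sub_sub_cancel, transpose_mul, transpose_transpose,
          transpose_inv_of_posDef hr, transpose_eq_of_nonneg hp, Matrix.mul_assoc]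
        abel

end ClosedLoop

section Riccati

variable {n m N : ℕ} {T : ℝ} {tp : ℕ → ℝ}

lemma Icc_node_eq (hp : IsPartition T N tp) : Icc (tp 0) (tp N) = Icc 0 T := by
  rw [hp.2.1, hp.2.2.1]

lemma monotoneOn_node (hp : IsPartition T N tp) : MonotoneOn tp (Iic N) :=
  (strictMonoOn_Iic_of_lt_succ hp.2.2.2).monotoneOn

lemma node_mem_Icc (hp : IsPartition T N tp) {k : ℕ} (hk : k ≤ N) : tp k ∈ Icc 0 T := by
  rw [← Icc_node_eq hp]
  exact ⟨monotoneOn_node hp N.zero_le hk k.zero_le, monotoneOn_node hp hk self_mem_Iic hk⟩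

section Slices

variable {E : Type*} [TopologicalSpace E] {F : ℝ → ℝ → E}

lemma piecewiseContinuous_slice (hp : IsPartition T N tp)
    (hF : ∀ t ∈ Icc 0 T, ContinuousOn (F t) (Icc t T)) {k : ℕ} (hk : k ≤ N) :
    PiecewiseContinuous k N tp (F (tp k)) :=
  .of_continuousOn (monotoneOn_node hp) (hp.2.2.1.symm ▸ hF _ (node_mem_Icc hp hk))

lemma piecewiseContinuous_of_frozen {FΔ : ℝ → E} (hp : IsPartition T N tp)
    (hF : ∀ t ∈ Icc 0 T, ContinuousOn (F t) (Icc t T))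
    (hΔ : ∀ k < N, EqOn FΔ (F (tp k)) (Ico (tp k) (tp (k + 1)))) :
    PiecewiseContinuous 0 N tp FΔ := fun k _ hk =>
  ⟨F (tp k), (hF _ (node_mem_Icc hp hk.le)).mono (Icc_subset_Icc_right (node_mem_Icc hp hk).2),
    hΔ k hk⟩

end Slices

/-- The assumptions (H1)–(H2) of the paper reduced to what the bounds on `P^Δ` depend on: for
`0 ≤ t ≤ s ≤ T` the coefficients are continuous in `s`, `Q, G ≥ 0` and `R > 0`, and `Q, R, G` are
nondecreasing in `t`. -/
structure IsMonotoneLQ (T : ℝ) (A : ℝ → ℝ → Matrix (Fin n) (Fin n) ℝ)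
    (B : ℝ → ℝ → Matrix (Fin n) (Fin m) ℝ) (Q : ℝ → ℝ → Matrix (Fin n) (Fin n) ℝ)
    (R : ℝ → ℝ → Matrix (Fin m) (Fin m) ℝ) (G : ℝ → Matrix (Fin n) (Fin n) ℝ) : Prop where
  continuousOn_A : ∀ t ∈ Icc 0 T, ContinuousOn (A t) (Icc t T)
  continuousOn_B : ∀ t ∈ Icc 0 T, ContinuousOn (B t) (Icc t T)
  continuousOn_Q : ∀ t ∈ Icc 0 T, ContinuousOn (Q t) (Icc t T)
  continuousOn_R : ∀ t ∈ Icc 0 T, ContinuousOn (R t) (Icc t T)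
  nonneg_Q : ∀ t ∈ Icc 0 T, ∀ s ∈ Icc t T, 0 ≤ Q t s
  nonneg_G : ∀ t ∈ Icc 0 T, 0 ≤ G t
  posDef_R : ∀ t ∈ Icc 0 T, ∀ s ∈ Icc t T, (R t s).PosDef
  mono_Q : ∀ s ∈ Icc 0 T, MonotoneOn (fun t => Q t s) (Icc 0 s)
  mono_R : ∀ s ∈ Icc 0 T, MonotoneOn (fun t => R t s) (Icc 0 s)
  mono_G : MonotoneOn G (Icc 0 T)

variable {A : ℝ → ℝ → Matrix (Fin n) (Fin n) ℝ} {B : ℝ → ℝ → Matrix (Fin n) (Fin m) ℝ}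
  {Q : ℝ → ℝ → Matrix (Fin n) (Fin n) ℝ} {R : ℝ → ℝ → Matrix (Fin m) (Fin m) ℝ}
  {G : ℝ → Matrix (Fin n) (Fin n) ℝ} {AΔ : ℝ → Matrix (Fin n) (Fin n) ℝ}
  {BΔ : ℝ → Matrix (Fin n) (Fin m) ℝ} {QΔ : ℝ → Matrix (Fin n) (Fin n) ℝ}
  {RΔ : ℝ → Matrix (Fin m) (Fin m) ℝ} {P : ℝ → Matrix (Fin n) (Fin n) ℝ}
  {Φ : ℕ → ℝ → Matrix (Fin n) (Fin n) ℝ}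

lemma posDef_of_isFrozen (h : IsMonotoneLQ T A B Q R G) (hp : IsPartition T N tp)
    (hfr : IsFrozen n m N tp A B Q R AΔ BΔ QΔ RΔ) {k : ℕ} (hk : k < N) {s : ℝ}
    (hs : s ∈ Ico (tp k) (tp (k + 1))) : (RΔ s).PosDef := by
  rw [(hfr k hk s hs).2.2.2]
  exact h.posDef_R _ (node_mem_Icc hp hk.le) s ⟨hs.1, hs.2.le.trans (node_mem_Icc hp hk).2⟩

/-- The running cost, with data frozen at `t_k`, under the equilibrium feedback. -/
noncomputable def equilibriumCost (tp : ℕ → ℝ) (Q : ℝ → ℝ → Matrix (Fin n) (Fin n) ℝ)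
    (R : ℝ → ℝ → Matrix (Fin m) (Fin m) ℝ) (BΔ : ℝ → Matrix (Fin n) (Fin m) ℝ)
    (RΔ : ℝ → Matrix (Fin m) (Fin m) ℝ) (P : ℝ → Matrix (Fin n) (Fin n) ℝ) (k : ℕ) (s : ℝ) :
    Matrix (Fin n) (Fin n) ℝ :=
  closedLoopCost (Q (tp k) s) (R (tp k) s) (feedback (BΔ s) (RΔ s) (P s))

lemma equilibriumCost_nonneg (h : IsMonotoneLQ T A B Q R G) (hp : IsPartition T N tp) :
    ∀ k < N, ∀ s ∈ Icc (tp k) (tp N), 0 ≤ equilibriumCost tp Q R BΔ RΔ P k s := by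
  rw [hp.2.2.1]
  intro k hk s hs
  have htk := node_mem_Icc hp hk.le
  exact closedLoopCost_nonneg (h.nonneg_Q _ htk s hs) (h.posDef_R _ htk s hs).posSemidef.nonneg _

lemma equilibriumCost_le_succ (h : IsMonotoneLQ T A B Q R G) (hp : IsPartition T N tp) :
    ∀ k, k + 1 < N → ∀ s ∈ Icc (tp (k + 1)) (tp N),
      equilibriumCost tp Q R BΔ RΔ P k s ≤ equilibriumCost tp Q R BΔ RΔ P (k + 1) s := by
  rw [hp.2.2.1]
  intro k hk s hs
  have hlt := hp.2.2.2 k (k.lt_succ_self.trans hk)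
  have hk0 : 0 ≤ tp k := (node_mem_Icc hp (k.le_succ.trans hk.le)).1
  have hs' : s ∈ Icc 0 T := ⟨hk0.trans (hlt.le.trans hs.1), hs.2⟩
  have htk : tp k ∈ Icc 0 s := ⟨hk0, hlt.le.trans hs.1⟩
  have htk' : tp (k + 1) ∈ Icc 0 s := ⟨hk0.trans hlt.le, hs.1⟩
  exact closedLoopCost_mono (h.mono_Q s hs' htk htk' hlt.le) (h.mono_R s hs' htk htk' hlt.le) _

lemma terminalCost_le_succ (h : IsMonotoneLQ T A B Q R G) (hp : IsPartition T N tp) :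
    ∀ k, k + 1 < N → G (tp k) ≤ G (tp (k + 1)) := fun k hk =>
  h.mono_G (node_mem_Icc hp (k.le_succ.trans hk.le)) (node_mem_Icc hp hk.le)
    (hp.2.2.2 k (k.lt_succ_self.trans hk)).le

lemma isPiecewiseLyapunov_of_isPiecewiseRiccati (h : IsMonotoneLQ T A B Q R G)
    (hp : IsPartition T N tp) (hfr : IsFrozen n m N tp A B Q R AΔ BΔ QΔ RΔ)
    (hP : IsPiecewiseRiccati n m N T tp Q R G AΔ BΔ QΔ RΔ P Φ) :
    IsPiecewiseLyapunov N tp (fun s => closedLoop (AΔ s) (BΔ s) (RΔ s) (P s))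
      (equilibriumCost tp Q R BΔ RΔ P) (fun k => G (tp k)) Φ P := by
  obtain ⟨hPc, hPT, hP', hΦ, hPlim⟩ := hP
  have hA := piecewiseContinuous_of_frozen hp h.continuousOn_A fun k hk s hs => (hfr k hk s hs).1
  have hB := piecewiseContinuous_of_frozen hp h.continuousOn_B fun k hk s hs => (hfr k hk s hs).2.1
  have hRinv : PiecewiseContinuous 0 N tp fun s => (RΔ s)⁻¹ :=
    piecewiseContinuous_of_frozen (F := fun t s => (R t s)⁻¹) hp
      (fun t ht => continuousOn_inv_of_posDef (h.continuousOn_R t ht) (h.posDef_R t ht))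
      fun k hk s hs => congrArg _ (hfr k hk s hs).2.2.2
  have hPpc : PiecewiseContinuous 0 N tp P :=
    .of_tendsto hPc fun k hk => ⟨_, hPlim (k + 1) k.succ_pos hk⟩
  have hfeedback : PiecewiseContinuous 0 N tp fun s => feedback (BΔ s) (RΔ s) (P s) :=
    (hRinv.matrix_mul hB.matrix_transpose).matrix_mul hPpc
  obtain rfl : tp N = T := hp.2.2.1
  refine ⟨hp.2.2.2, ?coeff, fun k hk => ?running, hPc, fun k hk s hs => ?deriv, hΦ,
    fun k hk => ?limit, hPT⟩
  case coeff =>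
    exact hA.comp₂ (((hB.matrix_mul hRinv).matrix_mul hB.matrix_transpose).matrix_mul hPpc)
      continuous_sub
  case running =>
    exact (piecewiseContinuous_slice hp h.continuousOn_Q hk.le).comp₂
      ((hfeedback.mono k.zero_le).transpose_mul_mul
        (piecewiseContinuous_slice hp h.continuousOn_R hk.le)) continuous_add
  case deriv =>
    have hs' := Ioo_subset_Ico_self hs
    obtain ⟨-, -, hQs, hRs⟩ := hfr k hk s hs'
    refine (hP' k hk s hs).congr_deriv ?_
    rw [riccati_eq_lyapunov_closedLoop (posDef_of_isFrozen h hp hfr hk hs'), equilibriumCost,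
      hQs, hRs]
  case limit =>
    convert hPlim (k + 1) k.succ_pos hk using 2
    simp only [cost, equilibriumCost, closedLoopCost, feedback, Nat.add_sub_cancel,
      Matrix.mul_add, Matrix.add_mul, transpose_mul, Matrix.mul_assoc]

lemma nonneg_of_isPiecewiseRiccati (h : IsMonotoneLQ T A B Q R G)
    (hp : IsPartition T N tp) (hfr : IsFrozen n m N tp A B Q R AΔ BΔ QΔ RΔ)
    (hP : IsPiecewiseRiccati n m N T tp Q R G AΔ BΔ QΔ RΔ P Φ) : ∀ t ∈ Icc 0 T, 0 ≤ P t := by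
  rw [← Icc_node_eq hp]
  exact (isPiecewiseLyapunov_of_isPiecewiseRiccati h hp hfr hP).nonneg hp.1
    (equilibriumCost_nonneg h hp) fun k hk => h.nonneg_G _ (node_mem_Icc hp hk.le)

lemma le_of_lyapunov_supersolution (h : IsMonotoneLQ T A B Q R G)
    (hp : IsPartition T N tp) (hfr : IsFrozen n m N tp A B Q R AΔ BΔ QΔ RΔ)
    (hP : IsPiecewiseRiccati n m N T tp Q R G AΔ BΔ QΔ RΔ P Φ)
    {X X' : ℝ → Matrix (Fin n) (Fin n) ℝ} (hX : ContinuousOn X (Icc 0 T))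
    (hX' : ∀ k < N, ∀ s ∈ Ioo (tp k) (tp (k + 1)), HasDerivAt X (X' s) s)
    (hsuper : ∀ k < N, ∀ s ∈ Ioo (tp k) (tp (k + 1)),
      X' s + X s * AΔ s + (AΔ s)ᵀ * X s ≤ -QΔ s)
    (hend : G (tp (N - 1)) ≤ X T) : ∀ t ∈ Icc 0 T, P t ≤ X t := by
  rw [← Icc_node_eq hp] at hX ⊢
  refine (isPiecewiseLyapunov_of_isPiecewiseRiccati h hp hfr hP).le_of_supersolution
    (equilibriumCost_le_succ h hp) (terminalCost_le_succ h hp)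
    (piecewiseContinuous_of_frozen hp h.continuousOn_A fun k hk s hs => (hfr k hk s hs).1) hX hX'
    (fun k hk s hs => (hsuper k hk s hs).trans ?_) (hp.2.2.1.symm ▸ hend)
  have hs' := Ioo_subset_Ico_self hs
  have hs0 : s ∈ Icc 0 T :=
    ⟨(node_mem_Icc hp hk.le).1.trans hs.1.le, hs.2.le.trans (node_mem_Icc hp hk).2⟩
  obtain ⟨-, -, hQs, hRs⟩ := hfr k hk s hs'
  rw [equilibriumCost, ← hQs, ← hRs]
  exact neg_le_sub_closedLoopCost (posDef_of_isFrozen h hp hfr hk hs')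
    (nonneg_of_isPiecewiseRiccati h hp hfr hP s hs0)

lemma le_of_lyapunov_solution (h : IsMonotoneLQ T A B Q R G)
    (hp : IsPartition T N tp) (hfr : IsFrozen n m N tp A B Q R AΔ BΔ QΔ RΔ)
    (hP : IsPiecewiseRiccati n m N T tp Q R G AΔ BΔ QΔ RΔ P Φ)
    {X : ℝ → Matrix (Fin n) (Fin n) ℝ} (hX : ContinuousOn X (Icc 0 T))
    (heq : ∀ s ∈ Icc (0 : ℝ) T,
      X s = G (tp (N - 1)) + ∫ r in s..T, (X r * AΔ r + (AΔ r)ᵀ * X r + QΔ r)) :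
    ∀ t ∈ Icc 0 T, P t ≤ X t := by
  have htp := monotoneOn_node hp
  have hXpc : PiecewiseContinuous 0 N tp X := .of_continuousOn htp (Icc_node_eq hp ▸ hX)
  have hA := piecewiseContinuous_of_frozen hp h.continuousOn_A fun k hk s hs => (hfr k hk s hs).1
  have hQ := piecewiseContinuous_of_frozen hp h.continuousOn_Q
    fun k hk s hs => (hfr k hk s hs).2.2.1
  have hrhs : PiecewiseContinuous 0 N tp fun s => X s * AΔ s + (AΔ s)ᵀ * X s + QΔ s :=
    ((hXpc.matrix_mul hA).comp₂ (hA.matrix_transpose.matrix_mul hXpc) continuous_add).comp₂ hQ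
      continuous_add
  have hT : T ∈ Icc 0 T := hp.2.2.1 ▸ node_mem_Icc hp le_rfl
  rw [← Icc_node_eq hp] at heq
  refine le_of_lyapunov_supersolution h hp hfr hP hX
    (fun k hk s hs => hrhs.hasDerivAt_of_eq_add_integral htp (hp.2.2.1.symm ▸ heq) k.zero_le hk hs)
    (fun _ _ _ _ => ?_) ?_
  · rw [add_assoc, neg_add_rev, neg_add_cancel_right]
  · rw [heq T (Icc_node_eq hp ▸ hT), intervalIntegral.integral_same, add_zero]

lemma hasDerivAt_const_mul_exp_const_sub (γ c T t : ℝ) :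
    HasDerivAt (fun t => γ * Real.exp (c * (T - t))) (-(c * (γ * Real.exp (c * (T - t))))) t :=
  ((((hasDerivAt_id t).const_sub T).const_mul c).exp.const_mul γ).congr_deriv
    (by simp only [id]; ring)

lemma le_exp_smul_one_of_isPiecewiseRiccati (h : IsMonotoneLQ T A B Q R G) {a q : ℝ}
    (ha : ∀ t ∈ Icc 0 T, ∀ s ∈ Icc t T, ‖A t s‖ ≤ a)
    (hq : ∀ t ∈ Icc 0 T, ∀ s ∈ Icc t T, ‖Q t s‖ ≤ q) (hp : IsPartition T N tp)
    (hfr : IsFrozen n m N tp A B Q R AΔ BΔ QΔ RΔ)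
    (hP : IsPiecewiseRiccati n m N T tp Q R G AΔ BΔ QΔ RΔ P Φ) : ∀ t ∈ Icc 0 T,
    P t ≤ (n * (q + ‖G T‖) * Real.exp ((2 * n * a + 1) * (T - t))) • 1 := by
  have hT : T ∈ Icc 0 T := hp.2.2.1 ▸ node_mem_Icc hp le_rfl
  have ha0 : 0 ≤ a := (norm_nonneg _).trans (ha T hT T ⟨le_rfl, le_rfl⟩)
  have hq0 : 0 ≤ q := (norm_nonneg _).trans (hq T hT T ⟨le_rfl, le_rfl⟩)
  have hX' := fun t => (hasDerivAt_const_mul_exp_const_sub (n * (q + ‖G T‖)) (2 * n * a + 1) T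
    t).smul_const (1 : Matrix (Fin n) (Fin n) ℝ)
  refine le_of_lyapunov_supersolution h hp hfr hP
    (fun t _ => (hX' t).continuousAt.continuousWithinAt) (fun _ _ s _ => hX' s)
    (fun k hk s hs => ?super) ?terminal
  case super =>
    have htk := node_mem_Icc hp hk.le
    have hs' : s ∈ Icc (tp k) T := ⟨hs.1.le, hs.2.le.trans (node_mem_Icc hp hk).2⟩
    have hexp : 1 ≤ Real.exp ((2 * n * a + 1) * (T - s)) :=
      Real.one_le_exp (mul_nonneg (by positivity) (sub_nonneg.2 hs'.2))
    have hscalar : n * q ≤ n * (q + ‖G T‖) * Real.exp ((2 * n * a + 1) * (T - s)) :=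
      calc n * q ≤ n * (q + ‖G T‖) := by gcongr; exact le_add_of_nonneg_right (norm_nonneg _)
        _ ≤ _ := le_mul_of_one_le_right (by positivity) hexp
    obtain ⟨hAs, -, hQs, -⟩ := hfr k hk s (Ioo_subset_Ico_self hs)
    rw [hAs, hQs]
    simpa only [Fintype.card_fin] using lyapunov_smul_one_le_neg (ha _ htk s hs')
      (transpose_eq_of_nonneg (h.nonneg_Q _ htk s hs')) (hq _ htk s hs')
      (by rwa [Fintype.card_fin])
  case terminal =>
    have hN := node_mem_Icc hp (N.sub_le 1)
    rw [sub_self, mul_zero, Real.exp_zero, mul_one]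
    calc G (tp (N - 1)) ≤ G T := h.mono_G hN hT hN.2
      _ ≤ (n * ‖G T‖) • 1 := by
        simpa only [Fintype.card_fin] using
          le_smul_one_of_norm_le (transpose_eq_of_nonneg (h.nonneg_G T hT)) le_rfl
      _ ≤ (n * (q + ‖G T‖)) • 1 := smul_one_mono <| by
        gcongr
        exact le_add_of_nonneg_left hq0

lemma norm_le_of_isPiecewiseRiccati (h : IsMonotoneLQ T A B Q R G) {a q : ℝ}
    (ha : ∀ t ∈ Icc 0 T, ∀ s ∈ Icc t T, ‖A t s‖ ≤ a)
    (hq : ∀ t ∈ Icc 0 T, ∀ s ∈ Icc t T, ‖Q t s‖ ≤ q) (hp : IsPartition T N tp)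
    (hfr : IsFrozen n m N tp A B Q R AΔ BΔ QΔ RΔ)
    (hP : IsPiecewiseRiccati n m N T tp Q R G AΔ BΔ QΔ RΔ P Φ) {t : ℝ} (ht : t ∈ Icc 0 T) :
    ‖P t‖ ≤ n * (q + ‖G T‖) * Real.exp ((2 * n * a + 1) * T) := by
  have ha0 : 0 ≤ a := (norm_nonneg _).trans (ha t ht t (left_mem_Icc.2 ht.2))
  have hq0 : 0 ≤ q := (norm_nonneg _).trans (hq t ht t (left_mem_Icc.2 ht.2))
  calc ‖P t‖ ≤ n * (q + ‖G T‖) * Real.exp ((2 * n * a + 1) * (T - t)) :=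
        norm_le_of_nonneg_of_le_smul_one (by positivity)
          (nonneg_of_isPiecewiseRiccati h hp hfr hP t ht)
          (le_exp_smul_one_of_isPiecewiseRiccati h ha hq hp hfr hP t ht)
    _ ≤ n * (q + ‖G T‖) * Real.exp ((2 * n * a + 1) * T) := by
        gcongr
        exact sub_le_self T ht.1

lemma isMonotoneLQ_of_coercive {δ : ℝ} (hδ : 0 < δ)
    (hA : ContinuousOn (fun p : ℝ × ℝ => A p.1 p.2) (Icc 0 T ×ˢ Icc 0 T))
    (hB : ContinuousOn (fun p : ℝ × ℝ => B p.1 p.2) (Icc 0 T ×ˢ Icc 0 T))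
    (hQ : ContinuousOn (fun p : ℝ × ℝ => Q p.1 p.2) (Icc 0 T ×ˢ Icc 0 T))
    (hR : ContinuousOn (fun p : ℝ × ℝ => R p.1 p.2) (Icc 0 T ×ˢ Icc 0 T))
    (hQ0 : ∀ t ∈ Icc 0 T, ∀ s ∈ Icc 0 T, (Q t s).PosSemidef)
    (hG0 : ∀ t ∈ Icc 0 T, (G t).PosSemidef)
    (hRδ : ∀ t ∈ Icc 0 T, ∀ s ∈ Icc 0 T,
      (R t s - δ • (1 : Matrix (Fin m) (Fin m) ℝ)).PosSemidef)
    (hGm : ∀ t r : ℝ, 0 ≤ t → t ≤ r → r ≤ T → (G r - G t).PosSemidef)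
    (hQm : ∀ t r s : ℝ, 0 ≤ t → t ≤ r → r ≤ s → s ≤ T → (Q r s - Q t s).PosSemidef)
    (hRm : ∀ t r s : ℝ, 0 ≤ t → t ≤ r → r ≤ s → s ≤ T → (R r s - R t s).PosSemidef) :
    IsMonotoneLQ T A B Q R G := by
  have htriangle : ∀ t ∈ Icc 0 T, Icc t T ⊆ Icc 0 T := fun t ht => Icc_subset_Icc_left ht.1
  have hslice : ∀ t ∈ Icc 0 T, MapsTo (fun s => (t, s)) (Icc t T) (Icc 0 T ×ˢ Icc 0 T) :=
    fun t ht s hs => ⟨ht, htriangle t ht hs⟩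
  have hpair : ∀ t, ContinuousOn (fun s : ℝ => (t, s)) (Icc t T) := fun t => by fun_prop
  refine ⟨fun t ht => hA.comp (hpair t) (hslice t ht), fun t ht => hB.comp (hpair t) (hslice t ht),
    fun t ht => hQ.comp (hpair t) (hslice t ht), fun t ht => hR.comp (hpair t) (hslice t ht),
    fun t ht s hs => (hQ0 t ht s (htriangle t ht hs)).nonneg, fun t ht => (hG0 t ht).nonneg,
    fun t ht s hs => ?posDef, fun s hs t ht r hr htr => hQm t r s ht.1 htr hr.2 hs.2,
    fun s hs t ht r hr htr => hRm t r s ht.1 htr hr.2 hs.2,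
    fun t ht r hr htr => hGm t r ht.1 htr hr.2⟩
  simpa only [sub_add_cancel] using
    PosDef.posSemidef_add (hRδ t ht s (htriangle t ht hs)) (PosDef.one.smul hδ)

end Riccati

end FrozenLQ

theorem stmt_2_general (n m : ℕ) (T a q : ℝ) (A : ℝ → ℝ → Matrix (Fin n) (Fin n) ℝ)
    (B : ℝ → ℝ → Matrix (Fin n) (Fin m) ℝ) (Q : ℝ → ℝ → Matrix (Fin n) (Fin n) ℝ)
    (R : ℝ → ℝ → Matrix (Fin m) (Fin m) ℝ) (G : ℝ → Matrix (Fin n) (Fin n) ℝ)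
    (h : FrozenLQ.IsMonotoneLQ T A B Q R G)
    (ha : ∀ t ∈ Icc 0 T, ∀ s ∈ Icc t T, ‖A t s‖ ≤ a)
    (hq : ∀ t ∈ Icc 0 T, ∀ s ∈ Icc t T, ‖Q t s‖ ≤ q) (N : ℕ) (tp : ℕ → ℝ)
    (hp : IsPartition T N tp) (AΔ : ℝ → Matrix (Fin n) (Fin n) ℝ)
    (BΔ : ℝ → Matrix (Fin n) (Fin m) ℝ) (QΔ : ℝ → Matrix (Fin n) (Fin n) ℝ)
    (RΔ : ℝ → Matrix (Fin m) (Fin m) ℝ) (hfr : IsFrozen n m N tp A B Q R AΔ BΔ QΔ RΔ)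
    (PΔ : ℝ → Matrix (Fin n) (Fin n) ℝ) (Φ : ℕ → ℝ → Matrix (Fin n) (Fin n) ℝ)
    (hP : IsPiecewiseRiccati n m N T tp Q R G AΔ BΔ QΔ RΔ PΔ Φ) :
    (∀ Pbar0 : ℝ → Matrix (Fin n) (Fin n) ℝ, ContinuousOn Pbar0 (Icc 0 T) →
      (∀ s ∈ Icc (0 : ℝ) T, Pbar0 s = G (tp (N - 1))
        + ∫ r in s..T, (Pbar0 r * AΔ r + (AΔ r)ᵀ * Pbar0 r + QΔ r)) →
      ∀ t ∈ Icc (0 : ℝ) T, (PΔ t).PosSemidef ∧ (Pbar0 t - PΔ t).PosSemidef) ∧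
    ∀ t ∈ Icc (0 : ℝ) T, ‖PΔ t‖ ≤ n * (q + ‖G T‖) * Real.exp ((2 * n * a + 1) * T) :=
  ⟨fun _ hc heq t ht =>
    ⟨nonneg_iff_posSemidef.1 (FrozenLQ.nonneg_of_isPiecewiseRiccati h hp hfr hP t ht),
      le_iff.1 (FrozenLQ.le_of_lyapunov_solution h hp hfr hP hc heq t ht)⟩,
    fun _ ht => FrozenLQ.norm_le_of_isPiecewiseRiccati h ha hq hp hfr hP ht⟩

/-- under (H1)–(H2), for every partition `Δ` one has
`0 ≤ P^Δ(t) ≤ P̄₀^Δ(t)` on `[0,T]`, where `P̄₀^Δ` is the solution of the Lyapunov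
equation `Ṗ + PA^Δ + (A^Δ)ᵀP + Q^Δ = 0` on `(0,T)` with `P(T) = G(t_{N−1})` (written
in integral form); consequently there is a constant `K > 0` independent of the
partition `Δ` with `‖P^Δ(t)‖ ≤ K` for all `t ∈ [0,T]` and all `Δ`. -/
theorem stmt_2 (n m : ℕ) (T L δ : ℝ) (hT : 0 < T) (hL : 0 < L) (hδ : 0 < δ)
    (A : ℝ → ℝ → Matrix (Fin n) (Fin n) ℝ) (B : ℝ → ℝ → Matrix (Fin n) (Fin m) ℝ)
    (Q : ℝ → ℝ → Matrix (Fin n) (Fin n) ℝ) (R : ℝ → ℝ → Matrix (Fin m) (Fin m) ℝ)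
    (G : ℝ → Matrix (Fin n) (Fin n) ℝ)
    -- (H1): continuity
    (hAc : ContinuousOn (fun p : ℝ × ℝ => A p.1 p.2) (Icc 0 T ×ˢ Icc 0 T))
    (hBc : ContinuousOn (fun p : ℝ × ℝ => B p.1 p.2) (Icc 0 T ×ˢ Icc 0 T))
    (hQc : ContinuousOn (fun p : ℝ × ℝ => Q p.1 p.2) (Icc 0 T ×ˢ Icc 0 T))
    (hRc : ContinuousOn (fun p : ℝ × ℝ => R p.1 p.2) (Icc 0 T ×ˢ Icc 0 T))
    (hGc : ContinuousOn G (Icc 0 T))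
    -- (H1): Lipschitz continuity in the first variable
    (hLip : ∀ t ∈ Icc (0:ℝ) T, ∀ r ∈ Icc (0:ℝ) T, ∀ s ∈ Icc (0:ℝ) T,
      ‖A t s - A r s‖ + ‖B t s - B r s‖ + ‖Q t s - Q r s‖ + ‖R t s - R r s‖
          + ‖G t - G r‖ ≤ L * |t - r|)
    -- (H1): positivity
    (hQ : ∀ t ∈ Icc (0:ℝ) T, ∀ s ∈ Icc (0:ℝ) T, (Q t s).PosSemidef)
    (hG : ∀ t ∈ Icc (0:ℝ) T, (G t).PosSemidef)
    (hR : ∀ t ∈ Icc (0:ℝ) T, ∀ s ∈ Icc (0:ℝ) T,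
      (R t s - δ • (1 : Matrix (Fin m) (Fin m) ℝ)).PosSemidef)
    -- (H2): monotonicity in the first variable
    (hGm : ∀ t r : ℝ, 0 ≤ t → t ≤ r → r ≤ T → (G r - G t).PosSemidef)
    (hQm : ∀ t r s : ℝ, 0 ≤ t → t ≤ r → r ≤ s → s ≤ T → (Q r s - Q t s).PosSemidef)
    (hRm : ∀ t r s : ℝ, 0 ≤ t → t ≤ r → r ≤ s → s ≤ T → (R r s - R t s).PosSemidef)
    :
    (∀ (N : ℕ) (tp : ℕ → ℝ), IsPartition T N tp →
      ∀ (AΔ : ℝ → Matrix (Fin n) (Fin n) ℝ) (BΔ : ℝ → Matrix (Fin n) (Fin m) ℝ)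
        (QΔ : ℝ → Matrix (Fin n) (Fin n) ℝ) (RΔ : ℝ → Matrix (Fin m) (Fin m) ℝ),
        IsFrozen n m N tp A B Q R AΔ BΔ QΔ RΔ →
      ∀ (PΔ : ℝ → Matrix (Fin n) (Fin n) ℝ) (Φ : ℕ → ℝ → Matrix (Fin n) (Fin n) ℝ),
        IsPiecewiseRiccati n m N T tp Q R G AΔ BΔ QΔ RΔ PΔ Φ →
      ∀ Pbar0 : ℝ → Matrix (Fin n) (Fin n) ℝ,
        ContinuousOn Pbar0 (Icc 0 T) →
        (∀ s ∈ Icc (0:ℝ) T,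
          Pbar0 s = G (tp (N - 1))
            + ∫ r in s..T, (Pbar0 r * AΔ r + (AΔ r)ᵀ * Pbar0 r + QΔ r)) →
        ∀ t ∈ Icc (0:ℝ) T, (PΔ t).PosSemidef ∧ (Pbar0 t - PΔ t).PosSemidef) ∧
    (∃ K > (0:ℝ), ∀ (N : ℕ) (tp : ℕ → ℝ), IsPartition T N tp →
      ∀ (AΔ : ℝ → Matrix (Fin n) (Fin n) ℝ) (BΔ : ℝ → Matrix (Fin n) (Fin m) ℝ)
        (QΔ : ℝ → Matrix (Fin n) (Fin n) ℝ) (RΔ : ℝ → Matrix (Fin m) (Fin m) ℝ),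
        IsFrozen n m N tp A B Q R AΔ BΔ QΔ RΔ →
      ∀ (PΔ : ℝ → Matrix (Fin n) (Fin n) ℝ) (Φ : ℕ → ℝ → Matrix (Fin n) (Fin n) ℝ),
        IsPiecewiseRiccati n m N T tp Q R G AΔ BΔ QΔ RΔ PΔ Φ →
      ∀ t ∈ Icc (0:ℝ) T, ‖PΔ t‖ ≤ K) := by
  have h := FrozenLQ.isMonotoneLQ_of_coercive hδ hAc hBc hQc hRc hQ hG hR hGm hQm hRm
  obtain ⟨a, ha⟩ := (isCompact_Icc.prod isCompact_Icc).exists_bound_of_continuousOn hAc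
  obtain ⟨q, hq⟩ := (isCompact_Icc.prod isCompact_Icc).exists_bound_of_continuousOn hQc
  have hgeneral := stmt_2_general n m T a q A B Q R G h
    (fun t ht s hs => ha (t, s) ⟨ht, Icc_subset_Icc_left ht.1 hs⟩)
    (fun t ht s hs => hq (t, s) ⟨ht, Icc_subset_Icc_left ht.1 hs⟩)
  exact ⟨fun N tp hp AΔ BΔ QΔ RΔ hfr PΔ Φ hP => (hgeneral N tp hp AΔ BΔ QΔ RΔ hfr PΔ Φ hP).1,
    max 1 _, lt_max_of_lt_left one_pos, fun N tp hp AΔ BΔ QΔ RΔ hfr PΔ Φ hP t ht =>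
      ((hgeneral N tp hp AΔ BΔ QΔ RΔ hfr PΔ Φ hP).2 t ht).trans (le_max_right _ _)⟩
end

section
/- Let A:[0,T]→ℝ^{n×n}, B:[0,T]→ℝ^{n×m}, Q:[0,T]→𝒮ⁿ, R:[0,T]→𝒮ᵐ be continuous with Q(s) ≥ 0 and R(s) ≥ δI for all s and some δ>0, and let G ∈ 𝒮ⁿ with G ≥ 0. Then the Riccati differential equation Ṗ(s)+P(s)A(s)+A(s)ᵀP(s)+Q(s)−P(s)B(s)R(s)^{−1}B(s)ᵀP(s)=0 on [0,T] with terminal condition P(T)=G admits a unique continuously differentiable solution P:[0,T]→𝒮ⁿ defined on the whole interval [0,T] (no blow-up), and P(s) ≥ 0 for all s ∈ [0,T]. -/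
open Set Matrix

attribute [local instance] Matrix.normedAddCommGroup Matrix.normedSpace

/-!
Radon's substitution `P = Y X⁻¹` turns the Riccati equation into the linear Hamiltonian system
`X' = A X - S Y`, `Y' = -Q X - A⋆ Y` with `S = B R⁻¹ B⋆`, `X b = 1`, `Y b = G`, which is solvable on
the whole interval; blow-up of `P` could only come from `X` losing invertibility. The product
`X⋆ Y` has derivative `-(Y⋆ S Y + X⋆ Q X) ≤ 0`, hence decreases to `G` and is nonnegative. If
`X t * c = 0`, then `(X c, Y c)` is again a Hamiltonian pair, whose product `c⋆ X⋆ Y c` vanishes at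
`t`, hence throughout `[t, b]`; so its derivative vanishes, which forces `S Y c = 0`. The equation
for `X c` reduces to `(X c)' = A (X c)` and `c = X b * c = 0`. Finally `P = (X⁻¹)⋆ (X⋆ Y) X⁻¹ ≥ 0`.
-/

open scoped NNReal

section RadialRetraction

variable {E : Type*} [NormedAddCommGroup E] [NormedSpace ℝ E] {r : ℝ}

/-- The retraction of `E` onto the closed ball of radius `r > 0` about the origin along rays, used
to truncate vector fields: points of the ball have scaling factor `r / max r ‖x‖ = 1`. -/
noncomputable def radialRetraction (r : ℝ) (x : E) : E :=
  (r / max r ‖x‖) • x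

theorem radialRetraction_of_norm_le (hr : 0 < r) {x : E} (hx : ‖x‖ ≤ r) :
    radialRetraction r x = x := by
  rw [radialRetraction, max_eq_left hx, div_self hr.ne', one_smul]

theorem norm_radialRetraction_le (hr : 0 < r) (x : E) : ‖radialRetraction r x‖ ≤ r := by
  have hmax : 0 < max r ‖x‖ := lt_max_of_lt_left hr
  rw [radialRetraction, norm_smul, Real.norm_of_nonneg (by positivity), div_mul_eq_mul_div,
    div_le_iff₀ hmax]
  gcongr
  exact le_max_right _ _

theorem norm_div_max_norm_smul_le (hr : 0 < r) (x y : E) : ‖(r / max r ‖x‖) • y‖ ≤ ‖y‖ := by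
  have hmax : 0 < max r ‖x‖ := lt_max_of_lt_left hr
  rw [norm_smul, Real.norm_of_nonneg (by positivity)]
  exact mul_le_of_le_one_left (norm_nonneg y) ((div_le_one hmax).2 (le_max_left _ _))

theorem norm_radialRetraction_le_norm (hr : 0 < r) (x : E) : ‖radialRetraction r x‖ ≤ ‖x‖ :=
  norm_div_max_norm_smul_le hr x x

theorem lipschitzWith_radialRetraction (hr : 0 < r) :
    LipschitzWith 2 (radialRetraction r : E → E) := by
  refine .of_dist_le_mul fun x y => ?_
  have hy : 0 < max r ‖y‖ := lt_max_of_lt_left hr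
  have hmax : |max r ‖y‖ - max r ‖x‖| ≤ ‖x - y‖ := by
    rw [norm_sub_rev, max_comm r, max_comm r]
    exact (abs_max_sub_max_le_abs _ _ _).trans (abs_norm_sub_norm_le y x)
  have hsplit : radialRetraction r x - radialRetraction r y =
      (r / max r ‖x‖) • ((x - y) + ((max r ‖y‖ - max r ‖x‖) / max r ‖y‖) • y) := by
    have hfactor : r / max r ‖y‖ =
        r / max r ‖x‖ * (1 - (max r ‖y‖ - max r ‖x‖) / max r ‖y‖) := by
      have hx : max r ‖x‖ ≠ 0 := (lt_max_of_lt_left hr).ne'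
      field_simp
      ring
    rw [radialRetraction, radialRetraction, hfactor]
    module
  have hdefect : ‖((max r ‖y‖ - max r ‖x‖) / max r ‖y‖) • y‖ ≤ ‖x - y‖ := by
    rw [norm_smul, norm_div, Real.norm_of_nonneg hy.le, Real.norm_eq_abs, div_mul_eq_mul_div,
      div_le_iff₀ hy]
    gcongr
    exact le_max_right _ _
  rw [dist_eq_norm, dist_eq_norm, hsplit]
  calc _ ≤ ‖(x - y) + ((max r ‖y‖ - max r ‖x‖) / max r ‖y‖) • y‖ :=
        norm_div_max_norm_smul_le hr x _
    _ ≤ ‖x - y‖ + ‖x - y‖ := norm_add_le_of_le le_rfl hdefect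
    _ = (2 : ℝ≥0) * ‖x - y‖ := by rw [NNReal.coe_ofNat, two_mul]

end RadialRetraction

section IntegralCurve

variable {E : Type*} [NormedAddCommGroup E] [NormedSpace ℝ E] {v : ℝ → E → E} {γ γ' : ℝ → E}
  {a b : ℝ} {K : ℝ≥0}

theorem isIntegralCurveOn_Icc_eqOn_of_left (hv : ∀ t ∈ Icc a b, LipschitzWith K (v t))
    (hγ : IsIntegralCurveOn γ v (Icc a b)) (hγ' : IsIntegralCurveOn γ' v (Icc a b))
    (h : γ a = γ' a) : EqOn γ γ' (Icc a b) :=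
  ODE_solution_unique_of_mem_Icc_right (s := fun _ => univ)
    (fun t ht => (hv t (Ico_subset_Icc_self ht)).lipschitzOnWith)
    hγ.continuousOn
    (fun t ht => (hγ t (Ico_subset_Icc_self ht)).mono_of_mem_nhdsWithin
      (Icc_mem_nhdsGE_of_mem ht))
    (fun _ _ => mem_univ _)
    hγ'.continuousOn
    (fun t ht => (hγ' t (Ico_subset_Icc_self ht)).mono_of_mem_nhdsWithin
      (Icc_mem_nhdsGE_of_mem ht))
    (fun _ _ => mem_univ _) h

theorem isIntegralCurveOn_Icc_eqOn_of_right (hv : ∀ t ∈ Icc a b, LipschitzWith K (v t))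
    (hγ : IsIntegralCurveOn γ v (Icc a b)) (hγ' : IsIntegralCurveOn γ' v (Icc a b))
    (h : γ b = γ' b) : EqOn γ γ' (Icc a b) :=
  ODE_solution_unique_of_mem_Icc_left (s := fun _ => univ)
    (fun t ht => (hv t (Ioc_subset_Icc_self ht)).lipschitzOnWith)
    hγ.continuousOn
    (fun t ht => (hγ t (Ioc_subset_Icc_self ht)).mono_of_mem_nhdsWithin
      (Icc_mem_nhdsLE_of_mem ht))
    (fun _ _ => mem_univ _)
    hγ'.continuousOn
    (fun t ht => (hγ' t (Ioc_subset_Icc_self ht)).mono_of_mem_nhdsWithin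
      (Icc_mem_nhdsLE_of_mem ht))
    (fun _ _ => mem_univ _) h

theorem norm_le_gronwallBound_of_isIntegralCurveOn {K C : ℝ}
    (hv : ∀ t ∈ Icc a b, ∀ x, ‖v t x‖ ≤ K * ‖x‖ + C) (hγ : IsIntegralCurveOn γ v (Icc a b)) :
    ∀ t ∈ Icc a b, ‖γ t‖ ≤ gronwallBound ‖γ a‖ K C (t - a) :=
  norm_le_gronwallBound_of_norm_deriv_right_le hγ.continuousOn
    (fun t ht => (hγ t (Ico_subset_Icc_self ht)).mono_of_mem_nhdsWithin
      (Icc_mem_nhdsGE_of_mem ht))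
    le_rfl fun t ht => hv t (Ico_subset_Icc_self ht) (γ t)

variable [CompleteSpace E]

theorem exists_isIntegralCurveOn_Icc_of_norm_le {L : ℝ≥0} {t₀ : ℝ} (ht₀ : t₀ ∈ Icc a b)
    (hv : ∀ t ∈ Icc a b, LipschitzWith K (v t)) (hcont : ∀ x, ContinuousOn (v · x) (Icc a b))
    (hL : ∀ t ∈ Icc a b, ∀ x, ‖v t x‖ ≤ L) (x₀ : E) :
    ∃ γ, γ t₀ = x₀ ∧ IsIntegralCurveOn γ v (Icc a b) := by
  have hPL : IsPicardLindelof v (⟨t₀, ht₀⟩ : Icc a b) x₀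
      (L * (max (b - t₀) (t₀ - a)).toNNReal) 0 L K :=
    { lipschitzOnWith := fun t ht => (hv t ht).lipschitzOnWith
      continuousOn := fun x _ => hcont x
      norm_le := fun t ht x _ => hL t ht x
      mul_max_le := by
        rw [NNReal.coe_mul, Real.coe_toNNReal _ (le_max_of_le_left (sub_nonneg.2 ht₀.2)),
          NNReal.coe_zero, sub_zero] }
  exact hPL.exists_eq_forall_mem_Icc_hasDerivWithinAt₀

-- Truncating the field outside a ball makes it bounded, and by Grönwall the integral curve of the
-- truncated field never leaves the ball.
theorem exists_isIntegralCurveOn_Icc_of_left (hab : a ≤ b)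
    (hv : ∀ t ∈ Icc a b, LipschitzWith K (v t)) (hcont : ∀ x, ContinuousOn (v · x) (Icc a b))
    (x₀ : E) : ∃ γ, γ a = x₀ ∧ IsIntegralCurveOn γ v (Icc a b) := by
  obtain ⟨C, hC⟩ := isCompact_Icc.exists_bound_of_continuousOn (hcont 0)
  have hC₀ : 0 ≤ C := (norm_nonneg _).trans (hC a (left_mem_Icc.2 hab))
  have hgrowth : ∀ t ∈ Icc a b, ∀ x, ‖v t x‖ ≤ K * ‖x‖ + C := fun t ht x =>
    calc ‖v t x‖ ≤ ‖v t x - v t 0‖ + ‖v t 0‖ := norm_le_norm_sub_add _ _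
      _ ≤ K * ‖x‖ + C := by
        gcongr
        · simpa using (hv t ht).norm_sub_le x 0
        · exact hC t ht
  set r : ℝ := max 1 (gronwallBound ‖x₀‖ K C (b - a))
  have hr : 0 < r := lt_max_of_lt_left one_pos
  obtain ⟨γ, hγa, hγ⟩ := exists_isIntegralCurveOn_Icc_of_norm_le
    (v := fun t x => v t (radialRetraction r x)) (L := K * r.toNNReal + C.toNNReal)
    (left_mem_Icc.2 hab) (fun t ht => (hv t ht).comp (lipschitzWith_radialRetraction hr))
    (fun x => hcont _)
    (fun t ht x => (hgrowth t ht _).trans <| by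
      rw [NNReal.coe_add, NNReal.coe_mul, Real.coe_toNNReal r hr.le, Real.coe_toNNReal C hC₀]
      gcongr
      exact norm_radialRetraction_le hr x) x₀
  have hγr : ∀ t ∈ Icc a b, ‖γ t‖ ≤ r := fun t ht =>
    calc ‖γ t‖ ≤ gronwallBound ‖γ a‖ K C (t - a) :=
          norm_le_gronwallBound_of_isIntegralCurveOn (fun t ht x => (hgrowth t ht _).trans <| by
            gcongr
            exact norm_radialRetraction_le_norm hr x) hγ t ht
      _ ≤ gronwallBound ‖x₀‖ K C (b - a) := by
        rw [hγa]
        exact gronwallBound_mono (norm_nonneg _) hC₀ K.2 (sub_le_sub_right ht.2 a)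
      _ ≤ r := le_max_right _ _
  refine ⟨γ, hγa, fun t ht => ?_⟩
  simpa only [radialRetraction_of_norm_le hr (hγr t ht)] using hγ t ht

theorem exists_isIntegralCurveOn_Icc_of_right (hab : a ≤ b)
    (hv : ∀ t ∈ Icc a b, LipschitzWith K (v t)) (hcont : ∀ x, ContinuousOn (v · x) (Icc a b))
    (x₀ : E) : ∃ γ, γ b = x₀ ∧ IsIntegralCurveOn γ v (Icc a b) := by
  have hneg : MapsTo Neg.neg (Icc (-b) (-a)) (Icc a b) := fun t ht =>
    ⟨le_neg.1 ht.2, neg_le.1 ht.1⟩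
  obtain ⟨γ, hγb, hγ⟩ := exists_isIntegralCurveOn_Icc_of_left (v := fun t x => -v (-t) x)
    (neg_le_neg hab) (fun t ht => (hv (-t) (hneg ht)).neg)
    (fun x => ((hcont x).comp continuousOn_neg hneg).neg) x₀
  refine ⟨γ ∘ (· * (-1)), by simpa using hγb, fun t ht => ?_⟩
  have hpreimage : {t : ℝ | t * (-1) ∈ Icc (-b) (-a)} = Icc a b := by
    ext t
    simp [and_comm]
  have hderiv := hγ.comp_mul (-1)
  rw [hpreimage] at hderiv
  simpa using hderiv t ht

end IntegralCurve

section LinearODE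

variable {E : Type*} [NormedAddCommGroup E] [NormedSpace ℝ E] {M : ℝ → E →L[ℝ] E} {γ : ℝ → E}
  {a b : ℝ}

theorem exists_forall_lipschitzWith_of_continuousOn {s : Set ℝ} (hs : IsCompact s)
    (hM : ContinuousOn M s) : ∃ K : ℝ≥0, ∀ t ∈ s, LipschitzWith K (M t) := by
  obtain ⟨C, hC⟩ := hs.exists_bound_of_continuousOn hM
  exact ⟨C.toNNReal, fun t ht =>
    (M t).lipschitz.weaken (NNReal.le_toNNReal_of_coe_le (hC t ht))⟩

theorem isIntegralCurveOn_zero (s : Set ℝ) : IsIntegralCurveOn 0 (fun t => M t) s := fun t _ => by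
  simpa using! hasDerivWithinAt_const t s (0 : E)

theorem eqOn_zero_of_isIntegralCurveOn_of_left (hM : ContinuousOn M (Icc a b))
    (hγ : IsIntegralCurveOn γ (fun t => M t) (Icc a b)) (ha : γ a = 0) : EqOn γ 0 (Icc a b) := by
  obtain ⟨K, hK⟩ := exists_forall_lipschitzWith_of_continuousOn isCompact_Icc hM
  exact isIntegralCurveOn_Icc_eqOn_of_left hK hγ (isIntegralCurveOn_zero _) ha

theorem eqOn_zero_of_isIntegralCurveOn_of_right (hM : ContinuousOn M (Icc a b))
    (hγ : IsIntegralCurveOn γ (fun t => M t) (Icc a b)) (hb : γ b = 0) : EqOn γ 0 (Icc a b) := by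
  obtain ⟨K, hK⟩ := exists_forall_lipschitzWith_of_continuousOn isCompact_Icc hM
  exact isIntegralCurveOn_Icc_eqOn_of_right hK hγ (isIntegralCurveOn_zero _) hb

theorem exists_linear_isIntegralCurveOn_Icc_of_right [CompleteSpace E] (hab : a ≤ b)
    (hM : ContinuousOn M (Icc a b)) (x₀ : E) :
    ∃ γ, γ b = x₀ ∧ IsIntegralCurveOn γ (fun t => M t) (Icc a b) := by
  obtain ⟨K, hK⟩ := exists_forall_lipschitzWith_of_continuousOn isCompact_Icc hM
  exact exists_isIntegralCurveOn_Icc_of_right hab hK (fun x => hM.clm_apply continuousOn_const) x₀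

end LinearODE

section OrderedNormedSpace

variable {E : Type*} [NormedAddCommGroup E] [NormedSpace ℝ E] [PartialOrder E]
  [IsOrderedAddMonoid E] [PosSMulMono ℝ E] [OrderClosedTopology E]

theorem nonneg_of_forall_strongDual_nonneg {x : E}
    (h : ∀ f : StrongDual ℝ E, (∀ y, 0 ≤ y → 0 ≤ f y) → 0 ≤ f x) : 0 ≤ x := by
  by_contra hx
  obtain ⟨f, hf, hfx⟩ := (ProperCone.positive ℝ E).hyperplane_separation_point hx
  exact hfx.not_ge (h f hf)

theorem antitoneOn_of_forall_hasDerivWithinAt_nonpos {F F' : ℝ → E} {D : Set ℝ}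
    (hD : Convex ℝ D) (hF : ∀ t ∈ D, HasDerivWithinAt F (F' t) D t) (hF' : ∀ t ∈ D, F' t ≤ 0) :
    AntitoneOn F D := by
  intro s hs t ht hst
  refine sub_nonneg.1 (nonneg_of_forall_strongDual_nonneg fun f hf => ?_)
  have hderiv : ∀ u ∈ D, HasDerivWithinAt (f ∘ F) (f (F' u)) D u := fun u hu =>
    f.hasFDerivAt.comp_hasDerivWithinAt u (hF u hu)
  have hanti : AntitoneOn (f ∘ F) D :=
    antitoneOn_of_hasDerivWithinAt_nonpos hD (fun u hu => (hderiv u hu).continuousWithinAt)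
      (fun u hu => (hderiv u (interior_subset hu)).mono interior_subset) fun u hu => by
        simpa using hf _ (neg_nonneg.2 (hF' u (interior_subset hu)))
  rw [map_sub]
  exact sub_nonneg.2 (hanti hs ht hst)

end OrderedNormedSpace

theorem mul_eq_zero_of_star_mul_mul_eq_zero {𝔄 : Type*} [NonUnitalNormedRing 𝔄] [StarRing 𝔄]
    [CStarRing 𝔄] [PartialOrder 𝔄] [StarOrderedRing 𝔄] {x z : 𝔄} (hx : 0 ≤ x)
    (h : star z * x * z = 0) : x * z = 0 := by
  rw [StarOrderedRing.nonneg_iff] at hx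
  induction hx using AddSubmonoid.closure_induction with
  | mem _ hs =>
    obtain ⟨s, rfl⟩ := hs
    have hsz : star (s * z) * (s * z) = 0 := by simpa only [star_mul, mul_assoc] using h
    rw [mul_assoc, (CStarRing.star_mul_self_eq_zero_iff _).1 hsz, mul_zero]
  | zero => exact zero_mul z
  | add x y hx hy ihx ihy =>
    have hxz : 0 ≤ star z * x * z := star_left_conjugate_nonneg (StarOrderedRing.nonneg_iff.2 hx) z
    have hyz : 0 ≤ star z * y * z := star_left_conjugate_nonneg (StarOrderedRing.nonneg_iff.2 hy) z
    rw [mul_add, add_mul, add_eq_zero_iff_of_nonneg hxz hyz] at h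
    rw [add_mul, ihx h.1, ihy h.2, add_zero]

section RiccatiField

variable {𝔄 : Type*} [NonUnitalRing 𝔄] [Star 𝔄]

/-- The time-dependent vector field of the differential Riccati equation
`P' + PA + A⋆P + Q - PSP = 0`, so that its solutions are the integral curves of this field. In
linear-quadratic control, `S = B R⁻¹ B⋆`. -/
def riccatiField (A Q S : ℝ → 𝔄) (t : ℝ) (P : 𝔄) : 𝔄 :=
  -(P * A t + star (A t) * P + Q t - P * S t * P)

theorem riccatiField_sub (A Q S : ℝ → 𝔄) (t : ℝ) (P P' : 𝔄) :
    riccatiField A Q S t P' - riccatiField A Q S t P =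
      -((P' - P) * (A t - S t * P) + (star (A t) - P' * S t) * (P' - P)) := by
  simp only [riccatiField]
  noncomm_ring

end RiccatiField

section Riccati

variable {𝔄 : Type*} [NormedRing 𝔄] [NormedAlgebra ℝ 𝔄] [StarRing 𝔄]
  {A Q S : ℝ → 𝔄} {a b : ℝ}

-- The difference of two solutions solves a linear equation whose coefficients involve both of them.
theorem eqOn_of_isIntegralCurveOn_riccatiField [ContinuousStar 𝔄]
    (hA : ContinuousOn A (Icc a b)) (hS : ContinuousOn S (Icc a b)) {P P' : ℝ → 𝔄}
    (hP : IsIntegralCurveOn P (riccatiField A Q S) (Icc a b))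
    (hP' : IsIntegralCurveOn P' (riccatiField A Q S) (Icc a b)) (hb : P' b = P b) :
    EqOn P' P (Icc a b) := by
  have hPc := hP.continuousOn
  have hPc' := hP'.continuousOn
  let M (t : ℝ) : 𝔄 →L[ℝ] 𝔄 :=
    -((ContinuousLinearMap.mul ℝ 𝔄).flip (A t - S t * P t) +
      ContinuousLinearMap.mul ℝ 𝔄 (star (A t) - P' t * S t))
  have hM : ContinuousOn M (Icc a b) := by fun_prop
  have hdiff : IsIntegralCurveOn (P' - P) (fun t => M t) (Icc a b) := fun t ht =>
    ((hP' t ht).sub (hP t ht)).congr_deriv (riccatiField_sub A Q S t _ _)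
  exact fun t ht => sub_eq_zero.1
    (eqOn_zero_of_isIntegralCurveOn_of_right hM hdiff (sub_eq_zero.2 hb) ht)

/-- `X` and `Y` solve the linear Hamiltonian system `X' = AX - SY`, `Y' = -QX - A⋆Y` on `u`, whose
solutions with `X` invertible yield the solutions `YX⁻¹` of the Riccati equation. -/
structure IsHamiltonianPair (A Q S X Y : ℝ → 𝔄) (u : Set ℝ) : Prop where
  hasDerivWithinAt_fst : ∀ t ∈ u, HasDerivWithinAt X (A t * X t - S t * Y t) u t
  hasDerivWithinAt_snd : ∀ t ∈ u, HasDerivWithinAt Y (-(Q t * X t) - star (A t) * Y t) u t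

theorem exists_isHamiltonianPair_Icc [CompleteSpace 𝔄] [ContinuousStar 𝔄] (hab : a ≤ b)
    (hA : ContinuousOn A (Icc a b)) (hQ : ContinuousOn Q (Icc a b))
    (hS : ContinuousOn S (Icc a b)) (X₀ Y₀ : 𝔄) :
    ∃ X Y : ℝ → 𝔄, X b = X₀ ∧ Y b = Y₀ ∧ IsHamiltonianPair A Q S X Y (Icc a b) := by
  let mul := ContinuousLinearMap.mul ℝ 𝔄
  let fst := ContinuousLinearMap.fst ℝ 𝔄 𝔄
  let snd := ContinuousLinearMap.snd ℝ 𝔄 𝔄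
  let M (t : ℝ) : 𝔄 × 𝔄 →L[ℝ] 𝔄 × 𝔄 :=
    .inl ℝ 𝔄 𝔄 ∘L (mul (A t) ∘L fst - mul (S t) ∘L snd) +
      .inr ℝ 𝔄 𝔄 ∘L (-(mul (Q t) ∘L fst) - mul (star (A t)) ∘L snd)
  have hM : ContinuousOn M (Icc a b) := by fun_prop
  have hM_apply (t : ℝ) (z : 𝔄 × 𝔄) :
      M t z = (A t * z.1 - S t * z.2, -(Q t * z.1) - star (A t) * z.2) := by
    simp [M, mul, fst, snd]
  obtain ⟨Z, hZb, hZ⟩ := exists_linear_isIntegralCurveOn_Icc_of_right hab hM (X₀, Y₀)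
  refine ⟨fun t => (Z t).1, fun t => (Z t).2, congrArg Prod.fst hZb, congrArg Prod.snd hZb,
    fun t ht => ?_, fun t ht => ?_⟩
  · exact (hasFDerivAt_fst.comp_hasDerivWithinAt t (hZ t ht)).congr_deriv
      (congrArg Prod.fst (hM_apply t (Z t)))
  · exact (hasFDerivAt_snd.comp_hasDerivWithinAt t (hZ t ht)).congr_deriv
      (congrArg Prod.snd (hM_apply t (Z t)))

namespace IsHamiltonianPair

variable {X Y : ℝ → 𝔄} {u v : Set ℝ}

theorem mono (h : IsHamiltonianPair A Q S X Y u) (hvu : v ⊆ u) :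
    IsHamiltonianPair A Q S X Y v :=
  ⟨fun t ht => (h.hasDerivWithinAt_fst t (hvu ht)).mono hvu,
    fun t ht => (h.hasDerivWithinAt_snd t (hvu ht)).mono hvu⟩

theorem mul_const (h : IsHamiltonianPair A Q S X Y u) (c : 𝔄) :
    IsHamiltonianPair A Q S (fun t => X t * c) (fun t => Y t * c) u where
  hasDerivWithinAt_fst t ht := by
    simpa only [sub_mul, mul_assoc] using (h.hasDerivWithinAt_fst t ht).mul_const c
  hasDerivWithinAt_snd t ht := by
    simpa only [sub_mul, neg_mul, mul_assoc] using (h.hasDerivWithinAt_snd t ht).mul_const c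

theorem isIntegralCurveOn_mul_inverse [CompleteSpace 𝔄] (h : IsHamiltonianPair A Q S X Y u)
    (hX : ∀ t ∈ u, IsUnit (X t)) :
    IsIntegralCurveOn (fun t => Y t * Ring.inverse (X t)) (riccatiField A Q S) u := by
  intro t ht
  obtain ⟨x, hx⟩ := hX t ht
  have hinv : HasDerivWithinAt (fun t => Ring.inverse (X t))
      (-(↑x⁻¹ * (A t * X t - S t * Y t) * ↑x⁻¹)) u t := by
    have hfderiv := hasFDerivAt_ringInverse (𝕜 := ℝ) x
    rw [hx] at hfderiv
    exact hfderiv.comp_hasDerivWithinAt t (h.hasDerivWithinAt_fst t ht)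
  refine ((h.hasDerivWithinAt_snd t ht).mul hinv).congr_deriv ?_
  simp only [riccatiField, ← hx, Ring.inverse_unit, sub_mul, mul_sub, neg_mul, mul_neg, mul_assoc,
    Units.mul_inv, mul_one]
  abel

section StarOrdered

variable [CStarRing 𝔄] [StarModule ℝ 𝔄] [PartialOrder 𝔄] [StarOrderedRing 𝔄]

theorem hasDerivWithinAt_star_mul (h : IsHamiltonianPair A Q S X Y u) {t : ℝ} (ht : t ∈ u)
    (hS : 0 ≤ S t) :
    HasDerivWithinAt (fun t => star (X t) * Y t)
      (-(star (Y t) * S t * Y t + star (X t) * Q t * X t)) u t := by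
  refine ((h.hasDerivWithinAt_fst t ht).star.mul (h.hasDerivWithinAt_snd t ht)).congr_deriv ?_
  rw [star_sub, star_mul, star_mul, (IsSelfAdjoint.of_nonneg hS).star_eq]
  noncomm_ring

variable [OrderClosedTopology 𝔄]

theorem antitoneOn_star_mul (h : IsHamiltonianPair A Q S X Y u) (hu : Convex ℝ u)
    (hQ : ∀ t ∈ u, 0 ≤ Q t) (hS : ∀ t ∈ u, 0 ≤ S t) :
    AntitoneOn (fun t => star (X t) * Y t) u :=
  antitoneOn_of_forall_hasDerivWithinAt_nonpos hu
    (fun t ht => h.hasDerivWithinAt_star_mul ht (hS t ht)) fun t ht =>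
      neg_nonpos.2 (add_nonneg (star_left_conjugate_nonneg (hS t ht) _)
        (star_left_conjugate_nonneg (hQ t ht) _))

theorem star_mul_nonneg (h : IsHamiltonianPair A Q S X Y (Icc a b))
    (hQ : ∀ t ∈ Icc a b, 0 ≤ Q t) (hS : ∀ t ∈ Icc a b, 0 ≤ S t)
    (hb : 0 ≤ star (X b) * Y b) : ∀ t ∈ Icc a b, 0 ≤ star (X t) * Y t := fun _ ht =>
  hb.trans (h.antitoneOn_star_mul (convex_Icc a b) hQ hS ht
    (right_mem_Icc.2 (ht.1.trans ht.2)) ht.2)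

theorem star_mul_eq_zero (h : IsHamiltonianPair A Q S X Y (Icc a b))
    (hQ : ∀ t ∈ Icc a b, 0 ≤ Q t) (hS : ∀ t ∈ Icc a b, 0 ≤ S t)
    (hb : 0 ≤ star (X b) * Y b) (ha : X a = 0) :
    ∀ t ∈ Icc a b, star (X t) * Y t = 0 := fun t ht => by
  refine le_antisymm ?_ (h.star_mul_nonneg hQ hS hb t ht)
  simpa [ha] using h.antitoneOn_star_mul (convex_Icc a b) hQ hS
    (left_mem_Icc.2 (ht.1.trans ht.2)) ht ht.1

theorem mul_snd_eq_zero (h : IsHamiltonianPair A Q S X Y (Icc a b)) (hab : a < b)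
    (hQ : ∀ t ∈ Icc a b, 0 ≤ Q t) (hS : ∀ t ∈ Icc a b, 0 ≤ S t)
    (hb : 0 ≤ star (X b) * Y b) (ha : X a = 0) : ∀ t ∈ Icc a b, S t * Y t = 0 := by
  intro t ht
  have hderiv : HasDerivWithinAt (fun t => star (X t) * Y t) 0 (Icc a b) t :=
    (hasDerivWithinAt_const t _ 0).congr_of_mem (h.star_mul_eq_zero hQ hS hb ha) ht
  have hsum : star (Y t) * S t * Y t + star (X t) * Q t * X t = 0 :=
    neg_eq_zero.1 ((uniqueDiffOn_Icc hab t ht).eq_deriv _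
      (h.hasDerivWithinAt_star_mul ht (hS t ht)) hderiv)
  exact mul_eq_zero_of_star_mul_mul_eq_zero (hS t ht)
    ((add_eq_zero_iff_of_nonneg (star_left_conjugate_nonneg (hS t ht) _)
      (star_left_conjugate_nonneg (hQ t ht) _)).1 hsum).1

theorem fst_right_eq_zero (h : IsHamiltonianPair A Q S X Y (Icc a b)) (hab : a ≤ b)
    (hA : ContinuousOn A (Icc a b)) (hQ : ∀ t ∈ Icc a b, 0 ≤ Q t)
    (hS : ∀ t ∈ Icc a b, 0 ≤ S t) (hb : 0 ≤ star (X b) * Y b) (ha : X a = 0) : X b = 0 := by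
  obtain rfl | hab := hab.eq_or_lt
  · exact ha
  have hX : IsIntegralCurveOn X (fun t => ContinuousLinearMap.mul ℝ 𝔄 (A t)) (Icc a b) :=
    fun t ht => by
      simpa only [h.mul_snd_eq_zero hab hQ hS hb ha t ht, sub_zero]
        using! h.hasDerivWithinAt_fst t ht
  exact eqOn_zero_of_isIntegralCurveOn_of_left (by fun_prop) hX ha (right_mem_Icc.2 hab.le)

theorem isUnit_fst [FiniteDimensional ℝ 𝔄] (h : IsHamiltonianPair A Q S X Y (Icc a b))
    (hA : ContinuousOn A (Icc a b)) (hQ : ∀ t ∈ Icc a b, 0 ≤ Q t)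
    (hS : ∀ t ∈ Icc a b, 0 ≤ S t) (hXb : X b = 1) (hYb : 0 ≤ Y b) :
    ∀ t ∈ Icc a b, IsUnit (X t) := by
  intro t ht
  have : IsArtinianRing 𝔄ᵐᵒᵖ := .of_finite ℝ _
  rw [IsArtinianRing.isUnit_iff_isLeftRegular, isLeftRegular_iff_right_eq_zero_of_mul]
  intro c hc
  have hsub : Icc t b ⊆ Icc a b := Icc_subset_Icc_left ht.1
  simpa [hXb] using ((h.mono hsub).mul_const c).fst_right_eq_zero ht.2 (hA.mono hsub)
    (fun s hs => hQ s (hsub hs)) (fun s hs => hS s (hsub hs))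
    (by simpa [hXb, mul_assoc] using star_left_conjugate_nonneg hYb c) hc

theorem mul_inverse_nonneg (h : IsHamiltonianPair A Q S X Y (Icc a b))
    (hX : ∀ t ∈ Icc a b, IsUnit (X t)) (hQ : ∀ t ∈ Icc a b, 0 ≤ Q t)
    (hS : ∀ t ∈ Icc a b, 0 ≤ S t) (hb : 0 ≤ star (X b) * Y b) :
    ∀ t ∈ Icc a b, 0 ≤ Y t * Ring.inverse (X t) := by
  intro t ht
  have hconj := star_left_conjugate_nonneg (h.star_mul_nonneg hQ hS hb t ht) (Ring.inverse (X t))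
  rwa [← Ring.inverse_star, ← mul_assoc, Ring.inverse_mul_cancel _ (hX t ht).star, one_mul]
    at hconj

end StarOrdered

end IsHamiltonianPair

theorem exists_nonneg_isIntegralCurveOn_riccatiField [CStarRing 𝔄] [StarModule ℝ 𝔄]
    [PartialOrder 𝔄] [StarOrderedRing 𝔄] [OrderClosedTopology 𝔄] [FiniteDimensional ℝ 𝔄] {G : 𝔄}
    (hab : a ≤ b) (hA : ContinuousOn A (Icc a b)) (hQc : ContinuousOn Q (Icc a b))
    (hSc : ContinuousOn S (Icc a b)) (hQ : ∀ t ∈ Icc a b, 0 ≤ Q t)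
    (hS : ∀ t ∈ Icc a b, 0 ≤ S t) (hG : 0 ≤ G) :
    ∃ P : ℝ → 𝔄, IsIntegralCurveOn P (riccatiField A Q S) (Icc a b) ∧ P b = G ∧
      (∀ t ∈ Icc a b, 0 ≤ P t) ∧
      ∀ P' : ℝ → 𝔄, IsIntegralCurveOn P' (riccatiField A Q S) (Icc a b) → P' b = G →
        EqOn P' P (Icc a b) := by
  have : CompleteSpace 𝔄 := FiniteDimensional.complete ℝ 𝔄
  obtain ⟨X, Y, hXb, hYb, hXY⟩ := exists_isHamiltonianPair_Icc hab hA hQc hSc 1 G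
  have hX : ∀ t ∈ Icc a b, IsUnit (X t) := hXY.isUnit_fst hA hQ hS hXb (hYb ▸ hG)
  have hP := hXY.isIntegralCurveOn_mul_inverse hX
  have hPb : Y b * Ring.inverse (X b) = G := by rw [hXb, hYb, Ring.inverse_one, mul_one]
  refine ⟨_, hP, hPb, hXY.mul_inverse_nonneg hX hQ hS ?_, fun P' hP' hPb' =>
    eqOn_of_isIntegralCurveOn_riccatiField hA hSc hP hP' (hPb'.trans hPb.symm)⟩
  rwa [hXb, hYb, star_one, one_mul]

end Riccati

section Matrix

open scoped ComplexOrder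

variable {𝕜 ι κ : Type*} [RCLike 𝕜]

theorem isClosed_setOf_matrix_posSemidef : IsClosed {M : Matrix ι ι 𝕜 | M.PosSemidef} := by
  simp only [PosSemidef, Finsupp.sum, Set.ofPred_and, Set.ofPred_forall]
  exact (isClosed_eq (by fun_prop) (by fun_prop)).inter
    (isClosed_iInter fun x => isClosed_le (by fun_prop) (by fun_prop))

variable [DecidableEq κ]

theorem posDef_of_posSemidef_sub_smul_one {M : Matrix κ κ 𝕜} {δ : ℝ} (hδ : 0 < δ)
    (hM : (M - δ • (1 : Matrix κ κ 𝕜)).PosSemidef) : M.PosDef := by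
  simpa using PosDef.posSemidef_add hM (PosDef.one.smul hδ)

variable [Fintype κ]

theorem continuousOn_matrix_inv {α : Type*} [TopologicalSpace α] {R : α → Matrix κ κ 𝕜}
    {u : Set α} (hR : ContinuousOn R u) (hu : ∀ t ∈ u, IsUnit (R t)) :
    ContinuousOn (fun t => (R t)⁻¹) u := fun t ht => by
  have hdet : IsUnit (R t).det := (isUnit_iff_isUnit_det _).1 (hu t ht)
  refine ContinuousAt.comp_continuousWithinAt (continuousAt_matrix_inv _ ?_) (hR t ht)
  rw [Ring.inverse_eq_inv']
  exact continuousAt_inv₀ hdet.ne_zero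

variable [Fintype ι] {a b : ℝ} {A Q : ℝ → Matrix ι ι 𝕜} {G : Matrix ι ι 𝕜}

open scoped MatrixOrder Matrix.Norms.L2Operator in
theorem exists_posSemidef_isIntegralCurveOn_riccatiField {S : ℝ → Matrix ι ι 𝕜} (hab : a ≤ b)
    (hA : ContinuousOn A (Icc a b)) (hQc : ContinuousOn Q (Icc a b))
    (hSc : ContinuousOn S (Icc a b)) (hQ : ∀ t ∈ Icc a b, (Q t).PosSemidef)
    (hS : ∀ t ∈ Icc a b, (S t).PosSemidef) (hG : G.PosSemidef) :
    ∃ P : ℝ → Matrix ι ι 𝕜, IsIntegralCurveOn P (riccatiField A Q S) (Icc a b) ∧ P b = G ∧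
      (∀ t ∈ Icc a b, (P t).PosSemidef) ∧
      ∀ P' : ℝ → Matrix ι ι 𝕜, IsIntegralCurveOn P' (riccatiField A Q S) (Icc a b) → P' b = G →
        EqOn P' P (Icc a b) := by
  classical
  let _ : NormedAlgebra ℝ (Matrix ι ι 𝕜) :=
    { (inferInstance : Algebra ℝ (Matrix ι ι 𝕜)) with
      norm_smul_le r M := by rw [← algebraMap_smul 𝕜 r M, norm_smul, norm_algebraMap'] }
  have : OrderClosedTopology (Matrix ι ι 𝕜) := ⟨isClosed_le_of_isClosed_nonneg <| by
    simpa only [nonneg_iff_posSemidef] using! isClosed_setOf_matrix_posSemidef (ι := ι) (𝕜 := 𝕜)⟩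
  simp only [← nonneg_iff_posSemidef] at hQ hS hG ⊢
  exact exists_nonneg_isIntegralCurveOn_riccatiField hab hA hQc hSc hQ hS hG

theorem stmt_6_general {B : ℝ → Matrix ι κ 𝕜} {R : ℝ → Matrix κ κ 𝕜} (hab : a ≤ b)
    (hA : ContinuousOn A (Icc a b)) (hB : ContinuousOn B (Icc a b))
    (hQc : ContinuousOn Q (Icc a b)) (hRc : ContinuousOn R (Icc a b))
    (hQ : ∀ t ∈ Icc a b, (Q t).PosSemidef) (hR : ∀ t ∈ Icc a b, (R t).PosDef)
    (hG : G.PosSemidef) :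
    ∃ P : ℝ → Matrix ι ι 𝕜,
      IsIntegralCurveOn P (riccatiField A Q fun t => B t * (R t)⁻¹ * (B t)ᴴ) (Icc a b) ∧
      P b = G ∧
      (∀ t ∈ Icc a b, (P t).PosSemidef) ∧
      ∀ P' : ℝ → Matrix ι ι 𝕜,
        IsIntegralCurveOn P' (riccatiField A Q fun t => B t * (R t)⁻¹ * (B t)ᴴ) (Icc a b) →
        P' b = G → EqOn P' P (Icc a b) := by
  have hRinv := continuousOn_matrix_inv hRc fun t ht => (hR t ht).isUnit
  exact exists_posSemidef_isIntegralCurveOn_riccatiField hab hA hQc (by fun_prop) hQ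
    (fun t ht => (hR t ht).inv.posSemidef.mul_mul_conjTranspose_same (B t)) hG

end Matrix

/-- global existence, uniqueness and positive semidefiniteness of the
solution of the matrix Riccati terminal value problem
`Ṗ + PA + AᵀP + Q − PBR⁻¹BᵀP = 0` on `[0,T]`, `P(T) = G`, under `Q(s) ≥ 0`,
`R(s) ≥ δI` (`δ > 0`) and `G ≥ 0` (no blow-up on `[0,T]`). -/
theorem stmt_6 (n m : ℕ) (T δ : ℝ) (hT : 0 < T) (hδ : 0 < δ)
    (A : ℝ → Matrix (Fin n) (Fin n) ℝ) (B : ℝ → Matrix (Fin n) (Fin m) ℝ)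
    (Q : ℝ → Matrix (Fin n) (Fin n) ℝ) (R : ℝ → Matrix (Fin m) (Fin m) ℝ)
    (G : Matrix (Fin n) (Fin n) ℝ)
    (hA : ContinuousOn A (Icc 0 T)) (hB : ContinuousOn B (Icc 0 T))
    (hQc : ContinuousOn Q (Icc 0 T)) (hRc : ContinuousOn R (Icc 0 T))
    (hQ : ∀ s ∈ Icc (0:ℝ) T, (Q s).PosSemidef)
    (hR : ∀ s ∈ Icc (0:ℝ) T, (R s - δ • (1 : Matrix (Fin m) (Fin m) ℝ)).PosSemidef)
    (hG : G.PosSemidef) :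
    ∃ P : ℝ → Matrix (Fin n) (Fin n) ℝ,
      (∀ s ∈ Icc (0:ℝ) T,
        HasDerivWithinAt P
          (-(P s * A s + (A s)ᵀ * P s + Q s - P s * B s * (R s)⁻¹ * (B s)ᵀ * P s))
          (Icc 0 T) s) ∧
      P T = G ∧
      (∀ s ∈ Icc (0:ℝ) T, (P s).IsSymm ∧ (P s).PosSemidef) ∧
      (∀ P' : ℝ → Matrix (Fin n) (Fin n) ℝ,
        (∀ s ∈ Icc (0:ℝ) T,
          HasDerivWithinAt P'
            (-(P' s * A s + (A s)ᵀ * P' s + Q s - P' s * B s * (R s)⁻¹ * (B s)ᵀ * P' s))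
            (Icc 0 T) s) →
        P' T = G → EqOn P' P (Icc 0 T)) := by
  have hRpos : ∀ s ∈ Icc (0:ℝ) T, (R s).PosDef := fun s hs =>
    posDef_of_posSemidef_sub_smul_one hδ (hR s hs)
  have hsymm (M : Matrix (Fin n) (Fin n) ℝ) : M.IsSymm ∧ M.PosSemidef ↔ M.PosSemidef :=
    and_iff_right_of_imp fun hM => isHermitian_iff_isSymm.1 hM.isHermitian
  simpa only [IsIntegralCurveOn, riccatiField, star_eq_conjTranspose,
    conjTranspose_eq_transpose_of_trivial, Matrix.mul_assoc, hsymm]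
    using! stmt_6_general hT.le hA hB hQc hRc hQ hRpos hG
end
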